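/- arXiv:1012.1103 — 4 statements merged into one kernel-verified Lean document; each statement's English description precedes it below -/
import Mathlib

section
/- Dynamical Frostman lemma: Let (X,T) be a topological dynamical system, K ⊆ X a non-empty compact set, s ≥ 0, N ∈ ℕ and ε > 0. Suppose c := W^s_{N,ε}(K) > 0. Then there exists a Borel probability measure μ on X such that μ(K) = 1 and μ(B_n(x,ε)) ≤ (1/c) e^{−ns} for every x ∈ X and every n ≥ N. -/
/-!
The measure comes from duality. On the continuous functions consider
`p f = W(χ_K · f⁺) / c`, where `W = W^s_{N,ε}` and `c = W(χ_K)`. Concatenating weighted families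
shows that `W` is subadditive (`Wpre_add_le`), rescaling the weights that it is positively
homogeneous (`Wpre_smul`), and compactness of `X` that `c < ∞` (`WpreSet_lt_top`); so `p` is a real
sublinear functional with `p 1 = 1` and `p f = 0` for `f ≤ 0`. By the Hahn–Banach theorem the
functional `a ↦ a` on constants extends to a linear `g ≤ p`, which is positive because
`g f ≤ p f = 0` whenever `f ≤ 0`. By Riesz–Markov–Kakutani `g` is integration against a measure `μ`,
and `μ X = g 1 = 1`.

Testing with the distance to `K`, on which `p` vanishes, shows that `μ` is carried by `K`. If
`0 ≤ f ≤ χ_{B_n(x,ε)}` with `n ≥ N`, the single ball `B_n(x,ε)` of weight `1` is an admissible family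
for `χ_K · f`, so `g f ≤ p f ≤ e^{-ns} / c`; the ball is open, so inner regularity and Urysohn's
lemma give the bound on its measure.
-/

open Filter Set MeasureTheory Topology
open scoped ENNReal NNReal

section Core

variable {X : Type*} [MetricSpace X]

/-- The open Bowen ball `B_n(x, ε)` = `{y : d_n(x,y) < ε}` where
`d_n(x,y) = max_{0 ≤ k ≤ n-1} d(T^k x, T^k y)` is the `n`-th Bowen metric. -/
def bowenBall (T : X → X) (x : X) (n : ℕ) (ε : ℝ) : Set X :=
  {y | ∀ k < n, dist (T^[k] x) (T^[k] y) < ε}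

/-- The closed Bowen ball `B̄_n(x, ε)` = `{y : d_n(x,y) ≤ ε}`. -/
def bowenClosedBall (T : X → X) (x : X) (n : ℕ) (ε : ℝ) : Set X :=
  {y | ∀ k < n, dist (T^[k] x) (T^[k] y) ≤ ε}

/-- `M^s_{N,ε}(Z)`: infimum of `Σ_i exp (- s n_i)` over finite or countable families
of open Bowen balls `{B_{n_i}(x_i, ε)}` with `n_i ≥ N` covering `Z`. -/
noncomputable def Mpre (T : X → X) (s : ℝ) (N : ℕ) (ε : ℝ) (Z : Set X) : ℝ≥0∞ :=
  ⨅ (I : Set ℕ) (x : ℕ → X) (n : ℕ → ℕ) (_ : ∀ i ∈ I, N ≤ n i)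
    (_ : Z ⊆ ⋃ i ∈ I, bowenBall T (x i) (n i) ε),
    ∑' i : I, ENNReal.ofReal (Real.exp (-s * n i))

/-- `M^s_ε(Z) = lim_{N → ∞} M^s_{N,ε}(Z)` (the quantity is nondecreasing in `N`). -/
noncomputable def MpreEps (T : X → X) (s : ℝ) (ε : ℝ) (Z : Set X) : ℝ≥0∞ :=
  ⨆ N : ℕ, Mpre T s N ε Z

/-- `M^s(Z) = lim_{ε → 0} M^s_ε(Z)` (the quantity is nondecreasing as `ε` decreases). -/
noncomputable def Mtop (T : X → X) (s : ℝ) (Z : Set X) : ℝ≥0∞ :=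
  ⨆ (ε : ℝ) (_ : 0 < ε), MpreEps T s ε Z

/-- Bowen's topological entropy `h^B_top(T,Z)`: the critical value of `s` at which
`M^s(Z)` jumps from `∞` to `0`. -/
noncomputable def bowenEntropy (T : X → X) (Z : Set X) : ℝ≥0∞ :=
  ⨆ (s : ℝ) (_ : Mtop T s Z = ∞), ENNReal.ofReal s

/-- `P^s_{N,ε}(Z)`: suprema of `Σ_i exp (- s n_i)` over finite or countable pairwise
disjoint families of closed Bowen balls `{B̄_{n_i}(x_i, ε)}` with `x_i ∈ Z`, `n_i ≥ N`. -/
noncomputable def Ppre (T : X → X) (s : ℝ) (N : ℕ) (ε : ℝ) (Z : Set X) : ℝ≥0∞ :=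
  ⨆ (I : Set ℕ) (x : ℕ → X) (n : ℕ → ℕ) (_ : ∀ i ∈ I, x i ∈ Z ∧ N ≤ n i)
    (_ : ∀ i ∈ I, ∀ j ∈ I, i ≠ j →
      Disjoint (bowenClosedBall T (x i) (n i) ε) (bowenClosedBall T (x j) (n j) ε)),
    ∑' i : I, ENNReal.ofReal (Real.exp (-s * n i))

/-- `P^s_ε(Z) = lim_{N → ∞} P^s_{N,ε}(Z)` (the quantity is nonincreasing in `N`). -/
noncomputable def PpreEps (T : X → X) (s : ℝ) (ε : ℝ) (Z : Set X) : ℝ≥0∞ :=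
  ⨅ N : ℕ, Ppre T s N ε Z

/-- `𝒫^s_ε(Z) = inf { Σ_{i} P^s_ε(Z_i) : ⋃_i Z_i ⊇ Z }`. -/
noncomputable def Pouter (T : X → X) (s : ℝ) (ε : ℝ) (Z : Set X) : ℝ≥0∞ :=
  ⨅ (Zs : ℕ → Set X) (_ : Z ⊆ ⋃ i, Zs i), ∑' i, PpreEps T s ε (Zs i)

/-- `h^P_top(T,Z,ε)`: the critical value of `s` at which `𝒫^s_ε(Z)` jumps from `∞` to `0`. -/
noncomputable def packEntropyEps (T : X → X) (ε : ℝ) (Z : Set X) : ℝ≥0∞ :=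
  ⨆ (s : ℝ) (_ : Pouter T s ε Z = ∞), ENNReal.ofReal s

/-- The packing topological entropy `h^P_top(T,Z) = lim_{ε → 0} h^P_top(T,Z,ε)`
(the quantity is nondecreasing as `ε` decreases). -/
noncomputable def packEntropy (T : X → X) (Z : Set X) : ℝ≥0∞ :=
  ⨆ (ε : ℝ) (_ : 0 < ε), packEntropyEps T ε Z

/-- `r_n(Z,ε)`: the largest cardinality of an `(n,ε)`-separated subset of `Z`,
i.e. a set in which distinct points `x, y` satisfy `d_n(x,y) > ε`. -/
noncomputable def maxSep (T : X → X) (Z : Set X) (n : ℕ) (ε : ℝ) : ℝ≥0∞ :=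
  ⨆ (E : Finset X) (_ : ↑E ⊆ Z ∧
    ∀ x ∈ E, ∀ y ∈ E, x ≠ y → ∃ k < n, ε < dist (T^[k] x) (T^[k] y)),
    (E.card : ℝ≥0∞)

/-- Logarithm on `ℝ≥0∞` (with `elog ∞ = ∞`), used for counting quantities. -/
noncomputable def elog (x : ℝ≥0∞) : ℝ≥0∞ :=
  if x = ∞ then ∞ else ENNReal.ofReal (Real.log x.toReal)

/-- The upper capacity topological entropy
`h^{UC}_top(T,Z) = lim_{ε → 0} limsup_{n → ∞} (1/n) log r_n(Z,ε)`. -/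
noncomputable def upcapEntropy (T : X → X) (Z : Set X) : ℝ≥0∞ :=
  ⨆ (ε : ℝ) (_ : 0 < ε), Filter.limsup (fun n : ℕ => elog (maxSep T Z n ε) / n) Filter.atTop

/-- `- log x` as a function `ℝ≥0∞ → ℝ≥0∞` (with `negLog 0 = ∞`), used for measures of balls. -/
noncomputable def negLog (x : ℝ≥0∞) : ℝ≥0∞ :=
  if x = 0 then ∞ else ENNReal.ofReal (-Real.log x.toReal)

variable [MeasurableSpace X]

/-- The lower local entropy `h̲_μ(T,x) = lim_{ε→0} liminf_{n→∞} -(1/n) log μ(B_n(x,ε))`. -/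
noncomputable def lowerLocalEntropy (T : X → X) (μ : Measure X) (x : X) : ℝ≥0∞ :=
  ⨆ (ε : ℝ) (_ : 0 < ε),
    Filter.liminf (fun n : ℕ => negLog (μ (bowenBall T x n ε)) / n) Filter.atTop

/-- The upper local entropy `h̄_μ(T,x) = lim_{ε→0} limsup_{n→∞} -(1/n) log μ(B_n(x,ε))`. -/
noncomputable def upperLocalEntropy (T : X → X) (μ : Measure X) (x : X) : ℝ≥0∞ :=
  ⨆ (ε : ℝ) (_ : 0 < ε),
    Filter.limsup (fun n : ℕ => negLog (μ (bowenBall T x n ε)) / n) Filter.atTop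

/-- The measure-theoretical lower entropy `h̲_μ(T) = ∫ h̲_μ(T,x) dμ(x)`. -/
noncomputable def lowerEntropy (T : X → X) (μ : Measure X) : ℝ≥0∞ :=
  ∫⁻ x, lowerLocalEntropy T μ x ∂μ

/-- The measure-theoretical upper entropy `h̄_μ(T) = ∫ h̄_μ(T,x) dμ(x)`. -/
noncomputable def upperEntropy (T : X → X) (μ : Measure X) : ℝ≥0∞ :=
  ∫⁻ x, upperLocalEntropy T μ x ∂μ

end Core

section Weighted

variable {X : Type*} [MetricSpace X]

/-- `W^s_{N,ε}(f)`: infimum of `Σ_i c_i exp (- s n_i)` over finite or countable families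
`{(B_{n_i}(x_i, ε), c_i)}` with `0 < c_i < ∞`, `n_i ≥ N` and `Σ_i c_i χ_{B_{n_i}(x_i,ε)} ≥ f`. -/
noncomputable def Wpre (T : X → X) (s : ℝ) (N : ℕ) (ε : ℝ) (f : X → ℝ≥0∞) : ℝ≥0∞ :=
  ⨅ (I : Set ℕ) (x : ℕ → X) (n : ℕ → ℕ) (c : ℕ → ℝ≥0∞)
    (_ : ∀ i ∈ I, 0 < c i ∧ c i < ∞ ∧ N ≤ n i)
    (_ : ∀ y : X, f y ≤ ∑' i : I, (bowenBall T (x i) (n i) ε).indicator (fun _ => c i) y),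
    ∑' i : I, c i * ENNReal.ofReal (Real.exp (-s * n i))

/-- `W^s_{N,ε}(Z) = W^s_{N,ε}(χ_Z)`. -/
noncomputable def WpreSet (T : X → X) (s : ℝ) (N : ℕ) (ε : ℝ) (Z : Set X) : ℝ≥0∞ :=
  Wpre T s N ε (Z.indicator 1)

/-- `W^s_ε(Z) = lim_{N → ∞} W^s_{N,ε}(Z)` (nondecreasing in `N`). -/
noncomputable def WpreEps (T : X → X) (s ε : ℝ) (Z : Set X) : ℝ≥0∞ :=
  ⨆ N : ℕ, WpreSet T s N ε Z

/-- `W^s(Z) = lim_{ε → 0} W^s_ε(Z)` (nondecreasing as `ε` decreases). -/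
noncomputable def Wtop (T : X → X) (s : ℝ) (Z : Set X) : ℝ≥0∞ :=
  ⨆ (ε : ℝ) (_ : 0 < ε), WpreEps T s ε Z

/-- The weighted Bowen topological entropy `h^{WB}_top(T,Z)`: the critical value of `s`
at which `W^s(Z)` jumps from `∞` to `0`. -/
noncomputable def weightedBowenEntropy (T : X → X) (Z : Set X) : ℝ≥0∞ :=
  ⨆ (s : ℝ) (_ : Wtop T s Z = ∞), ENNReal.ofReal s

end Weighted

section Helpers

variable {X : Type*} [MetricSpace X] {T : X → X} {s : ℝ} {N : ℕ} {ε : ℝ}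

/-- Any countable index type may be used in place of a subset of `ℕ` to bound `Wpre` above. -/
lemma Wpre_le_tsum [Nonempty X] {ι : Type*} [Countable ι] {f : X → ℝ≥0∞} (x : ι → X) (n : ι → ℕ)
    (c : ι → ℝ≥0∞) (h : ∀ i, 0 < c i ∧ c i < ∞ ∧ N ≤ n i)
    (hf : ∀ y, f y ≤ ∑' i, (bowenBall T (x i) (n i) ε).indicator (fun _ => c i) y) :
    Wpre T s N ε f ≤ ∑' i, c i * ENNReal.ofReal (Real.exp (-s * n i)) := by
  obtain ⟨e, he⟩ := exists_injective_nat ι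
  let x' : ℕ → X := Function.extend e x (fun _ => Classical.arbitrary X)
  let n' : ℕ → ℕ := Function.extend e n (fun _ => 0)
  let c' : ℕ → ℝ≥0∞ := Function.extend e c (fun _ => 0)
  have hx : ∀ i, x' (e i) = x i := fun i => he.extend_apply _ _ _
  have hn : ∀ i, n' (e i) = n i := fun i => he.extend_apply _ _ _
  have hc : ∀ i, c' (e i) = c i := fun i => he.extend_apply _ _ _
  have h1 : ∀ i ∈ range e, 0 < c' i ∧ c' i < ∞ ∧ N ≤ n' i := by
    rintro _ ⟨i, rfl⟩
    rw [hc, hn]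
    exact h i
  have h2 : ∀ y : X, f y ≤
      ∑' i : range e, (bowenBall T (x' i) (n' i) ε).indicator (fun _ => c' i) y := by
    intro y
    rw [tsum_range (f := fun i => (bowenBall T (x' i) (n' i) ε).indicator (fun _ => c' i) y) he]
    simpa only [hx, hn, hc] using hf y
  have h3 : ∑' i : range e, c' i * ENNReal.ofReal (Real.exp (-s * n' i)) =
      ∑' i, c i * ENNReal.ofReal (Real.exp (-s * n i)) := by
    rw [tsum_range (f := fun i => c' i * ENNReal.ofReal (Real.exp (-s * n' i))) he]
    simp only [hn, hc]
  rw [← h3]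
  exact iInf_le_of_le (range e) <| iInf_le_of_le x' <| iInf_le_of_le n' <| iInf_le_of_le c' <|
    iInf_le_of_le h1 <| iInf_le_of_le h2 le_rfl

lemma le_Wpre {f : X → ℝ≥0∞} {a : ℝ≥0∞}
    (h : ∀ (I : Set ℕ) (x : ℕ → X) (n : ℕ → ℕ) (c : ℕ → ℝ≥0∞),
      (∀ i ∈ I, 0 < c i ∧ c i < ∞ ∧ N ≤ n i) →
      (∀ y : X, f y ≤ ∑' i : I, (bowenBall T (x i) (n i) ε).indicator (fun _ => c i) y) →
      a ≤ ∑' i : I, c i * ENNReal.ofReal (Real.exp (-s * n i))) :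
    a ≤ Wpre T s N ε f := by
  unfold Wpre
  simp only [le_iInf_iff]
  exact h

lemma Wpre_mono {f g : X → ℝ≥0∞} (h : ∀ y, f y ≤ g y) :
    Wpre T s N ε f ≤ Wpre T s N ε g := by
  refine le_Wpre fun I x n c h1 h2 => ?_
  exact iInf_le_of_le I <| iInf_le_of_le x <| iInf_le_of_le n <| iInf_le_of_le c <|
    iInf_le_of_le h1 <| iInf_le_of_le (fun y => (h y).trans (h2 y)) le_rfl

lemma Wpre_zero [Nonempty X] : Wpre T s N ε (fun _ => 0) = 0 := by
  refine le_antisymm ?_ zero_le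
  refine (Wpre_le_tsum (ι := Empty) Empty.elim Empty.elim Empty.elim (fun i => i.elim)
    (fun y => zero_le)).trans ?_
  simp

lemma Wpre_add_le [Nonempty X] (f g : X → ℝ≥0∞) :
    Wpre T s N ε (fun y => f y + g y) ≤ Wpre T s N ε f + Wpre T s N ε g := by
  -- Truncated subtraction moves one term at a time across, so that both infima can be opened.
  rw [← tsub_le_iff_right]
  refine le_Wpre fun I x n c h1 h2 => ?_
  rw [tsub_le_iff_right, ← tsub_le_iff_left]
  refine le_Wpre fun J x' n' c' h1' h2' => ?_
  rw [tsub_le_iff_left]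
  refine (Wpre_le_tsum (ι := I ⊕ J) (Sum.elim (fun i => x i) (fun j => x' j))
    (Sum.elim (fun i => n i) (fun j => n' j)) (Sum.elim (fun i => c i) (fun j => c' j)) ?_ ?_).trans
    ?_
  · rintro (i | j)
    · exact h1 i i.2
    · exact h1' j j.2
  · intro y
    rw [Summable.tsum_sum ENNReal.summable ENNReal.summable]
    exact add_le_add (h2 y) (h2' y)
  · rw [Summable.tsum_sum ENNReal.summable ENNReal.summable]
    exact le_rfl

lemma Wpre_smul_le [Nonempty X] (f : X → ℝ≥0∞) {t : ℝ≥0∞} (h0 : t ≠ 0) (ht : t ≠ ∞) :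
    Wpre T s N ε (fun y => t * f y) ≤ t * Wpre T s N ε f := by
  rw [mul_comm t (Wpre T s N ε f), ← ENNReal.div_le_iff h0 ht]
  refine le_Wpre fun I x n c h1 h2 => ?_
  rw [ENNReal.div_le_iff h0 ht, mul_comm, ← ENNReal.tsum_mul_left]
  simp only [← mul_assoc]
  refine Wpre_le_tsum (ι := I) (fun i => x i) (fun i => n i) (fun i => t * c i) ?_ ?_
  · intro i
    obtain ⟨a, b, d⟩ := h1 i i.2
    exact ⟨ENNReal.mul_pos h0 a.ne', ENNReal.mul_lt_top ht.lt_top b, d⟩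
  · intro y
    refine (mul_le_mul_right (h2 y) t).trans ?_
    rw [← ENNReal.tsum_mul_left]
    refine ENNReal.tsum_le_tsum fun i => ?_
    by_cases hy : y ∈ bowenBall T (x i) (n i) ε <;> simp [hy]

lemma Wpre_smul [Nonempty X] (f : X → ℝ≥0∞) {t : ℝ≥0∞} (h0 : t ≠ 0) (ht : t ≠ ∞) :
    Wpre T s N ε (fun y => t * f y) = t * Wpre T s N ε f := by
  refine le_antisymm (Wpre_smul_le f h0 ht) ?_
  have h := Wpre_smul_le (T := T) (s := s) (N := N) (ε := ε) (fun y => t * f y)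
    (ENNReal.inv_ne_zero.2 ht) (ENNReal.inv_ne_top.2 h0)
  simp only [← mul_assoc, ENNReal.inv_mul_cancel h0 ht, one_mul] at h
  refine (mul_le_mul_right h t).trans ?_
  rw [← mul_assoc, ENNReal.mul_inv_cancel h0 ht, one_mul]

/-- A function dominated by one Bowen ball costs at most the price of that ball. -/
lemma Wpre_le_of_ball [Nonempty X] {f : X → ℝ≥0∞} (x : X) {n : ℕ} (hn : N ≤ n)
    (hf : ∀ y, f y ≤ (bowenBall T x n ε).indicator 1 y) :
    Wpre T s N ε f ≤ ENNReal.ofReal (Real.exp (-s * n)) := by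
  refine (Wpre_le_tsum (ι := Unit) (fun _ => x) (fun _ => n) (fun _ => 1)
    (fun _ => ⟨one_pos, ENNReal.one_lt_top, hn⟩) ?_).trans ?_
  · intro y
    simpa using! hf y
  · simp

lemma isOpen_bowenBall (hT : Continuous T) (x : X) (n : ℕ) : IsOpen (bowenBall T x n ε) := by
  have : bowenBall T x n ε = ⋂ k ∈ Finset.range n, {y | dist (T^[k] x) (T^[k] y) < ε} := by
    ext y
    simp [bowenBall]
  rw [this]
  exact isOpen_biInter_finset fun k _ =>
    isOpen_lt (continuous_const.dist (hT.iterate k)) continuous_const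

/-- Finitely many Bowen balls of order `N` cover the compact space `X`. -/
lemma WpreSet_lt_top [Nonempty X] [CompactSpace X] (hT : Continuous T) (hε : 0 < ε) (K : Set X) :
    WpreSet T s N ε K < ∞ := by
  obtain ⟨t, ht⟩ := isCompact_univ.elim_finite_subcover (fun x => bowenBall T x N ε)
    (fun x => isOpen_bowenBall hT x N)
    (fun x _ => mem_iUnion.2 ⟨x, fun k _ => by simpa using hε⟩)
  refine (Wpre_le_tsum (ι := t) (fun x => (x : X)) (fun _ => N) (fun _ => 1)
    (fun _ => ⟨one_pos, ENNReal.one_lt_top, le_rfl⟩) ?_).trans_lt ?_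
  · intro y
    obtain ⟨x, hx, hy⟩ : ∃ x ∈ t, y ∈ bowenBall T x N ε := by simpa using ht (mem_univ y)
    refine le_trans ?_ (ENNReal.le_tsum (⟨x, hx⟩ : t))
    rw [indicator_of_mem hy]
    exact indicator_le_self' (by simp) y
  · rw [tsum_fintype]
    simp [ENNReal.mul_lt_top_iff]

end Helpers

/-- **Dynamical Frostman's lemma** (Feng–Huang, Lemma 3.4): let `K` be a non-empty
compact subset of `X`, `s ≥ 0`, `N ∈ ℕ` and `ε > 0`, and suppose
`c := W^s_{N,ε}(K) > 0`.  Then there is a Borel probability measure `μ` on `X` with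
`μ(K) = 1` and `μ(B_n(x,ε)) ≤ (1/c) e^{-ns}` for all `x ∈ X` and all `n ≥ N`. -/
theorem dynamical_frostman
    {X : Type*} [MetricSpace X] [CompactSpace X] [MeasurableSpace X] [BorelSpace X]
    (T : X → X) (hT : Continuous T) (K : Set X) (hne : K.Nonempty) (hK : IsCompact K)
    (s : ℝ) (hs : 0 ≤ s) (N : ℕ) (ε : ℝ) (hε : 0 < ε)
    (hc : 0 < WpreSet T s N ε K) :
    ∃ μ : Measure X, IsProbabilityMeasure μ ∧ μ K = 1 ∧
      ∀ x : X, ∀ n : ℕ, N ≤ n →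
        μ (bowenBall T x n ε) ≤
          (WpreSet T s N ε K)⁻¹ * ENNReal.ofReal (Real.exp (-(n : ℝ) * s)) := by

  have : Nonempty X := ⟨hne.some⟩
  set c := WpreSet T s N ε K with hcdef
  have hctop : c < ∞ := WpreSet_lt_top hT hε K
  have hcr : 0 < c.toReal := ENNReal.toReal_pos hc.ne' hctop.ne
  -- `F f = χ_K · f⁺` as an extended nonnegative function, since `ofReal` truncates at `0`.
  let F : CompactlySupportedContinuousMap X ℝ → X → ℝ≥0∞ :=
    fun f y => K.indicator (fun z => ENNReal.ofReal (f z)) y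
  let W : (X → ℝ≥0∞) → ℝ≥0∞ := Wpre T s N ε
  have hWfin : ∀ f, W (F f) ≠ ∞ := by
    intro f
    obtain ⟨M, hM⟩ := isCompact_univ.exists_bound_of_continuousOn f.continuous.continuousOn
    have hM0 : 0 < max M 1 := lt_max_of_lt_right one_pos
    have h1 : W (F f) ≤ W (fun y => ENNReal.ofReal (max M 1) * K.indicator 1 y) := by
      refine Wpre_mono fun y => ?_
      by_cases hy : y ∈ K
      · simp only [F, indicator_of_mem hy, Pi.one_apply, mul_one]
        exact ENNReal.ofReal_le_ofReal
          ((le_abs_self _).trans ((hM y (mem_univ y)).trans (le_max_left _ _)))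
      · simp [F, hy]
    refine (h1.trans_lt ?_).ne
    have h2 : W (fun y => ENNReal.ofReal (max M 1) * K.indicator 1 y)
        = ENNReal.ofReal (max M 1) * c :=
      Wpre_smul _ (ENNReal.ofReal_pos.2 hM0).ne' ENNReal.ofReal_ne_top
    rw [h2]
    exact ENNReal.mul_lt_top ENNReal.ofReal_lt_top hctop
  let p : CompactlySupportedContinuousMap X ℝ → ℝ := fun f => (W (F f)).toReal / c.toReal
  have hp_nonneg : ∀ f, 0 ≤ p f := fun f => by positivity
  have hp_hom : ∀ t : ℝ, 0 < t → ∀ f, p (t • f) = t * p f := by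
    intro t ht f
    have : F (t • f) = fun y => ENNReal.ofReal t * F f y := by
      funext y
      by_cases hy : y ∈ K <;> simp [F, hy, ENNReal.ofReal_mul ht.le]
    have h2 : W (F (t • f)) = ENNReal.ofReal t * W (F f) := by
      rw [this]
      exact Wpre_smul _ (ENNReal.ofReal_pos.2 ht).ne' ENNReal.ofReal_ne_top
    simp only [p]
    rw [h2, ENNReal.toReal_mul, ENNReal.toReal_ofReal ht.le, mul_div_assoc]
  have hp_add : ∀ f g, p (f + g) ≤ p f + p g := by
    intro f g
    simp only [p]
    rw [← add_div, ← ENNReal.toReal_add (hWfin f) (hWfin g)]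
    refine div_le_div_of_nonneg_right (ENNReal.toReal_mono ?_ ?_) hcr.le
    · exact ENNReal.add_ne_top.2 ⟨hWfin f, hWfin g⟩
    · refine le_trans (Wpre_mono fun y => ?_) (Wpre_add_le (F f) (F g))
      by_cases hy : y ∈ K
      · simpa [F, hy] using ENNReal.ofReal_add_le
      · simp [F, hy]
  -- Only the positive part of `f` on `K` matters.
  have hp_zero : ∀ f : CompactlySupportedContinuousMap X ℝ, (∀ y ∈ K, f y ≤ 0) → p f = 0 := by
    intro f hf
    have : F f = fun _ => 0 := by
      funext y
      by_cases hy : y ∈ K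
      · simpa [F, hy] using hf y hy
      · simp [F, hy]
    have h2 : W (F f) = 0 := by rw [this]; exact Wpre_zero
    simp [p, h2]
  let toC : C(X, ℝ) → CompactlySupportedContinuousMap X ℝ :=
    fun f => CompactlySupportedContinuousMap.continuousMapEquiv f
  have htoC : ∀ (f : C(X, ℝ)) y, toC f y = f y := fun f y => rfl
  let e : CompactlySupportedContinuousMap X ℝ := toC 1
  have he1 : ∀ y, e y = 1 := fun y => rfl
  have he : e ≠ 0 := by
    intro h
    have := DFunLike.congr_fun h hne.some
    simp [he1] at this
  have hpe : p e = 1 := by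
    have h1 : F e = K.indicator 1 := by
      funext y
      by_cases hy : y ∈ K <;> simp [F, hy, he1]
    have h2 : W (F e) = c := by rw [h1]; rfl
    simp only [p]
    rw [h2, div_self hcr.ne']
  obtain ⟨g, hg1, hg2⟩ := exists_extension_of_le_sublinear
    (LinearPMap.mkSpanSingleton (σ := RingHom.id ℝ) e (1 : ℝ) he) p hp_hom hp_add (by
      rintro ⟨f, hf⟩
      obtain ⟨a, rfl⟩ := Submodule.mem_span_singleton.1 hf
      rw [LinearPMap.mkSpanSingleton'_apply]
      simp only [RingHom.id_apply, smul_eq_mul, mul_one]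
      rcases le_or_gt a 0 with ha | ha
      · exact ha.trans (hp_nonneg _)
      · rw [hp_hom a ha, hpe, mul_one])
  have hge : g e = 1 := by
    have := hg1 ⟨e, Submodule.mem_span_singleton_self e⟩
    exact this.trans (LinearPMap.mkSpanSingleton'_apply_self (σ := RingHom.id ℝ) e (1 : ℝ) _ _)
  have hgpos : ∀ f, 0 ≤ f → 0 ≤ g f := by
    intro f hf
    have h1 := hg2 (-f)
    rw [hp_zero (-f) (fun y _ => by simpa using hf y), map_neg] at h1
    linarith
  let Λ := PositiveLinearMap.mk₀ g hgpos
  let μ := RealRMK.rieszMeasure Λ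
  have hint : ∀ f : CompactlySupportedContinuousMap X ℝ, ∫ x, f x ∂μ = g f :=
    fun f => RealRMK.integral_rieszMeasure Λ f
  have : IsFiniteMeasure μ := by infer_instance
  have hμ : IsProbabilityMeasure μ := by
    have h1 : ∫ x, e x ∂μ = 1 := (hint e).trans hge
    simp only [he1, integral_const, smul_eq_mul, mul_one] at h1
    refine ⟨?_⟩
    rw [← ENNReal.toReal_eq_one_iff]
    exact h1
  refine ⟨μ, hμ, ?_, ?_⟩
  · let d : CompactlySupportedContinuousMap X ℝ :=
      toC ⟨fun y => Metric.infDist y K, Metric.continuous_infDist_pt K⟩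
    have hd : ∀ y, d y = Metric.infDist y K := fun y => rfl
    have h1 : ∫ x, d x ∂μ ≤ 0 := by
      rw [hint]
      refine (hg2 d).trans (hp_zero d fun y hy => ?_).le
      rw [hd, Metric.infDist_zero_of_mem hy]
    have hd0 : 0 ≤ (fun x => d x) := fun x => Metric.infDist_nonneg
    have h2 : (fun x => d x) =ᵐ[μ] 0 :=
      (integral_eq_zero_iff_of_nonneg hd0 d.integrable).1 (le_antisymm h1 (integral_nonneg hd0))
    rw [prob_compl_eq_zero_iff hK.measurableSet |>.symm]
    rw [← mem_ae_iff]
    filter_upwards [h2] with y hy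
    exact (hK.isClosed.mem_iff_infDist_zero hne).2 hy
  · intro x n hn
    have hU := isOpen_bowenBall (ε := ε) hT x n
    rw [hU.measure_eq_iSup_isCompact]
    refine iSup₂_le fun A hAU => iSup_le fun hA => ?_
    obtain ⟨f, hf0, hf1, hf01⟩ := exists_continuous_zero_one_of_isClosed hU.isClosed_compl
      hA.isClosed (disjoint_compl_left_iff_subset.2 hAU)
    have h1 : W (F (toC f)) ≤ ENNReal.ofReal (Real.exp (-s * n)) := by
      refine Wpre_le_of_ball x hn fun y => ?_
      by_cases hy : y ∈ bowenBall T x n ε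
      · rw [indicator_of_mem hy]
        refine (indicator_le_self K _ y).trans ?_
        simpa [htoC] using (hf01 y).2
      · have : f y = 0 := hf0 hy
        by_cases hyK : y ∈ K <;> simp [F, hyK, htoC, this]
    have h2 : g (toC f) ≤ c.toReal⁻¹ * Real.exp (-(n : ℝ) * s) := by
      refine (hg2 _).trans ?_
      simp only [p]
      rw [div_eq_inv_mul]
      refine mul_le_mul_of_nonneg_left ?_ (by positivity)
      refine ENNReal.toReal_le_of_le_ofReal (Real.exp_pos _).le (h1.trans_eq ?_)
      congr 2
      ring
    have h3 : μ.real A ≤ ∫ y, toC f y ∂μ := by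
      rw [← integral_indicator_one hA.measurableSet]
      refine integral_mono ((integrable_const 1).indicator hA.measurableSet) (toC f).integrable
        fun y => ?_
      by_cases hy : y ∈ A
      · simp [hy, htoC, hf1 hy]
      · simpa [hy, htoC] using (hf01 y).1
    rw [hint] at h3
    have h4 := ENNReal.ofReal_le_ofReal (h3.trans h2)
    rw [ofReal_measureReal, ENNReal.ofReal_mul (by positivity), ENNReal.ofReal_inv_of_pos hcr,
      ENNReal.ofReal_toReal hctop.ne] at h4
    exact h4
end

section
/- Let (X,T) be a topological dynamical system in which X is zero-dimensional. Then for every analytic subset Z ⊆ X, the Bowen topological entropy of Z equals the supremum of the Bowen topological entropies of its compact subsets: h^B_top(T,Z) = sup { h^B_top(T,K) : K ⊆ Z, K compact }. -/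
/-!
The statement is a capacitability argument for a net content. Fix a scale `ε` and a finite clopen
partition of `X` into atoms of diameter less than `ε`. Coding points by their itineraries through
the partition, a word `l` of length `n` determines a cylinder set, which is contained in every
Bowen ball `B_n(x, ε)` centred at one of its points; conversely, once `δ` is a Lebesgue number of
the partition, `B_n(x, δ)` is contained in the length-`n` cylinder of `x`. Hence the Bowen covering
quantities `M^s_{N,ε}` can be compared with the content `netContent` obtained by covering with
cylinders of length at least `N` (`Mpre_le_netContent` and `netContent_le_Mpre`).

Two cylinders that meet are nested, and this makes `netContent`, at a *fixed* `N`, continuous along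
increasing sequences of arbitrary sets (`netContent_iUnion_le`). Near-optimal covers `W k` of `E k`
are merged by keeping only the maximal cylinders of `W 0 ∪ ⋯ ∪ W k`; the discarded cylinders
together with the common ones still cover the smaller set, which gives a strong subadditivity
inequality (`tsum_maxWords_add_netContent_le`) keeping the total weight under control.

If `Z` is the continuous image `f '' (ℕ → ℕ)`, continuity along increasing sequences allows one to
bound the coordinates of `ℕ → ℕ` one at a time, by `b 0, b 1, …`, without the content dropping to
some fixed `c` below its initial value. The compact set `K = f '' ∏ [0, b i]` then has content at
least `c`: a cover of `K` by (open) cylinders already covers the image of the set where only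
finitely many coordinates are bounded (`exists_compact_le_netContent`). Passing back to Bowen balls,
`M^s_δ(K) > 0`, so `M^t(K) = ∞` for all `t < s`.
-/


open Filter Set MeasureTheory Topology
open scoped ENNReal NNReal

/-! ### Itineraries and cylinders -/

section Net

variable {X ι : Type*}

/-- The word of length `n` recording the labels `a (T^k x)`, `0 ≤ k < n`. -/
def itin (a : X → ι) (T : X → X) (x : X) (n : ℕ) : List ι :=
  (List.range n).map (fun k => a (T^[k] x))

/-- The cylinder of the word `l`: the points whose itinerary starts with `l`. -/
def cyl (a : X → ι) (T : X → X) (l : List ι) : Set X :=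
  {x | itin a T x l.length = l}

@[simp] lemma itin_length (a : X → ι) (T : X → X) (x : X) (n : ℕ) :
    (itin a T x n).length = n := by simp [itin]

lemma itin_succ (a : X → ι) (T : X → X) (x : X) (n : ℕ) :
    itin a T x (n + 1) = itin a T x n ++ [a (T^[n] x)] := by
  simp [itin, List.range_succ]

lemma itin_eq_iff {a : X → ι} {T : X → X} {x y : X} {n : ℕ} :
    itin a T x n = itin a T y n ↔ ∀ k < n, a (T^[k] x) = a (T^[k] y) := by
  simp [itin, List.map_inj_left]

lemma itin_prefix (a : X → ι) (T : X → X) (x : X) {m n : ℕ} (h : m ≤ n) :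
    itin a T x m <+: itin a T x n := by
  induction n, h using Nat.le_induction with
  | base => exact List.prefix_rfl
  | succ n _ ih =>
    rw [itin_succ]
    exact ih.trans (List.prefix_append _ _)

lemma cyl_nested {a : X → ι} {T : X → X} {x : X} {l l' : List ι}
    (h : x ∈ cyl a T l) (h' : x ∈ cyl a T l') : l <+: l' ∨ l' <+: l := by
  have e : itin a T x l.length = l := h
  have e' : itin a T x l'.length = l' := h'
  rcases le_total l.length l'.length with hl | hl
  · left; rw [← e, ← e']; exact itin_prefix a T x hl
  · right; rw [← e, ← e']; exact itin_prefix a T x hl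

lemma cyl_anti {a : X → ι} {T : X → X} {l l' : List ι} (h : l <+: l') :
    cyl a T l' ⊆ cyl a T l := by
  intro x hx
  have e' : itin a T x l'.length = l' := hx
  have h1 : itin a T x l.length <+: l' := by
    rw [← e']; simpa using itin_prefix a T x h.length_le
  have h2 := List.prefix_of_prefix_length_le h1 h (by simp)
  exact h2.eq_of_length (by simp)

/-! ### The net content and its continuity along increasing sequences -/

/-- The content of `E` for covers by cylinders of length at least `N`, where the cylinder of the
word `l` has weight `w l`. -/
noncomputable def netContent (a : X → ι) (T : X → X) (w : List ι → ℝ≥0∞) (N : ℕ) (E : Set X) :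
    ℝ≥0∞ :=
  ⨅ (A : Set (List ι)) (_ : ∀ l ∈ A, N ≤ l.length) (_ : E ⊆ ⋃ l ∈ A, cyl a T l),
    ∑' l : A, w l

lemma netContent_le {a : X → ι} {T : X → X} {w : List ι → ℝ≥0∞} {N : ℕ} {E : Set X}
    (A : Set (List ι)) (hA : ∀ l ∈ A, N ≤ l.length) (hE : E ⊆ ⋃ l ∈ A, cyl a T l) :
    netContent a T w N E ≤ ∑' l : A, w l :=
  iInf_le_of_le A (iInf_le_of_le hA (iInf_le _ hE))

lemma netContent_mono {a : X → ι} {T : X → X} {w : List ι → ℝ≥0∞} {N : ℕ} {E F : Set X}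
    (h : E ⊆ F) : netContent a T w N E ≤ netContent a T w N F :=
  le_iInf fun A => le_iInf fun hA => le_iInf fun hF => netContent_le A hA (h.trans hF)

/-- The words of `A` having no proper prefix in `A`, that is, the maximal cylinders of the
family `A`. -/
def maxWords (A : Set (List ι)) : Set (List ι) :=
  {l ∈ A | ∀ l' ∈ A, l' <+: l → l' = l}

lemma exists_maxWords_prefix (A : Set (List ι)) {l : List ι} (hl : l ∈ A) :
    ∃ l' ∈ maxWords A, l' <+: l := by
  induction hn : l.length using Nat.strong_induction_on generalizing l with
  | _ n ih =>
    by_cases h : ∀ l' ∈ A, l' <+: l → l' = l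
    · exact ⟨l, ⟨hl, h⟩, List.prefix_rfl⟩
    · push Not at h
      obtain ⟨l', hl', hp, hne⟩ := h
      have hlt : l'.length < n := by
        rw [← hn]
        exact lt_of_le_of_ne hp.length_le fun e => hne (hp.eq_of_length e)
      obtain ⟨l'', h1, h2⟩ := ih _ hlt hl' rfl
      exact ⟨l'', h1, h2.trans hp⟩

/-- Strong subadditivity: if `V` and `W` both cover `E`, then the non-maximal members of `V ∪ W`
together with the common members of `V` and `W` still cover `E`. -/
lemma tsum_maxWords_add_netContent_le {a : X → ι} {T : X → X} {w : List ι → ℝ≥0∞} {N : ℕ}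
    {E : Set X} (V W : Set (List ι)) (hV : ∀ l ∈ V, N ≤ l.length) (hW : ∀ l ∈ W, N ≤ l.length)
    (hEV : E ⊆ ⋃ l ∈ V, cyl a T l) (hEW : E ⊆ ⋃ l ∈ W, cyl a T l) :
    ∑' l : maxWords (V ∪ W), w l + netContent a T w N E ≤ ∑' l : V, w l + ∑' l : W, w l := by
  classical
  set R : Set (List ι) := ((V ∪ W) \ maxWords (V ∪ W)) ∪ (V ∩ W) with hR
  have hcov : netContent a T w N E ≤ ∑' l : R, w l := by
    apply netContent_le
    · rintro l (⟨hl | hl, _⟩ | hl)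
      exacts [hV l hl, hW l hl, hV l hl.1]
    · intro x hx
      obtain ⟨v, hv, hxv⟩ := mem_iUnion₂.1 (hEV hx)
      obtain ⟨u, hu, hxu⟩ := mem_iUnion₂.1 (hEW hx)
      by_cases huv : v = u
      · subst huv
        exact mem_iUnion₂.2 ⟨v, Or.inr ⟨hv, hu⟩, hxv⟩
      · rcases cyl_nested hxv hxu with h | h
        · exact mem_iUnion₂.2 ⟨u, Or.inl ⟨Or.inr hu, fun hm =>
            huv (hm.2 v (Or.inl hv) h)⟩, hxu⟩
        · exact mem_iUnion₂.2 ⟨v, Or.inl ⟨Or.inl hv, fun hm =>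
            huv (hm.2 u (Or.inr hu) h).symm⟩, hxv⟩
  refine (add_le_add_right hcov _).trans ?_
  rw [tsum_subtype, tsum_subtype, tsum_subtype, tsum_subtype, ← ENNReal.tsum_add,
    ← ENNReal.tsum_add]
  refine ENNReal.tsum_le_tsum fun l => ?_
  have hm : l ∈ maxWords (V ∪ W) → l ∈ V ∪ W := fun h => h.1
  by_cases h1 : l ∈ V <;> by_cases h2 : l ∈ W <;> by_cases h3 : l ∈ maxWords (V ∪ W) <;>
    simp_all [Set.indicator]

lemma netContent_iUnion_le {a : X → ι} {T : X → X} {w : List ι → ℝ≥0∞} {N : ℕ}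
    {E : ℕ → Set X} (hE : Monotone E) :
    netContent a T w N (⋃ k, E k) ≤ ⨆ k, netContent a T w N (E k) := by
  classical
  by_cases htop : (⨆ k, netContent a T w N (E k)) = ∞
  · rw [htop]; exact le_top
  have hfin : ∀ k, netContent a T w N (E k) ≠ ∞ := fun k =>
    ne_top_of_le_ne_top htop (le_iSup (fun k => netContent a T w N (E k)) k)
  refine ENNReal.le_of_forall_pos_le_add fun ε hε _ => ?_
  obtain ⟨e, he0, hesum⟩ := ENNReal.exists_pos_sum_of_countable'
    (ENNReal.coe_pos.2 hε).ne' ℕ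
  have hex : ∀ k, ∃ A : Set (List ι), (∀ l ∈ A, N ≤ l.length) ∧ (E k ⊆ ⋃ l ∈ A, cyl a T l) ∧
      ∑' l : A, w l ≤ netContent a T w N (E k) + e k := by
    intro k
    have hlt : netContent a T w N (E k) < netContent a T w N (E k) + e k :=
      ENNReal.lt_add_right (hfin k) (he0 k).ne'
    conv_lhs at hlt => unfold netContent
    simp only [iInf_lt_iff] at hlt
    obtain ⟨A, hA, hc, hlt⟩ := hlt
    exact ⟨A, hA, hc, hlt.le⟩
  choose W hWN hWc hWs using hex
  let U : ℕ → Set (List ι) := fun k => {l | ∃ i ≤ k, l ∈ W i}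
  have hmerge : ∀ k, maxWords (U (k + 1)) ⊆ maxWords (maxWords (U k) ∪ W (k + 1)) := by
    rintro k l ⟨⟨i, hi, hl⟩, hmax⟩
    refine ⟨?_, ?_⟩
    · rcases Nat.lt_or_ge k i with h | h
      · obtain rfl : i = k + 1 := by omega
        exact Or.inr hl
      · exact Or.inl ⟨⟨i, h, hl⟩, fun l' ⟨j, hj, hl'⟩ hp => hmax l' ⟨j, by omega, hl'⟩ hp⟩
    · rintro l' (⟨⟨j, hj, hl'⟩, _⟩ | hl') hp
      · exact hmax l' ⟨j, by omega, hl'⟩ hp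
      · exact hmax l' ⟨k + 1, le_rfl, hl'⟩ hp
  have hcovU : ∀ k, E k ⊆ ⋃ l ∈ maxWords (U k), cyl a T l := by
    intro k x hx
    obtain ⟨l, hl, hxl⟩ := mem_iUnion₂.1 (hWc k hx)
    obtain ⟨l', hl', hp⟩ := exists_maxWords_prefix (U k) (l := l) ⟨k, le_rfl, hl⟩
    exact mem_iUnion₂.2 ⟨l', hl', cyl_anti hp hxl⟩
  have hcost : ∀ k, ∑' l : maxWords (U k), w l ≤
      netContent a T w N (E k) + ∑ i ∈ Finset.range (k + 1), e i := by
    intro k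
    induction k with
    | zero =>
      have hsub : maxWords (U 0) ⊆ W 0 := by
        rintro l ⟨⟨i, hi, hl⟩, _⟩
        obtain rfl : i = 0 := by omega
        exact hl
      simpa using (ENNReal.tsum_mono_subtype w hsub).trans (hWs 0)
    | succ k ih =>
      have h1 := tsum_maxWords_add_netContent_le (w := w) (maxWords (U k)) (W (k + 1))
        (fun l ⟨⟨i, _, hl⟩, _⟩ => hWN i l hl) (hWN (k + 1)) (hcovU k)
        ((hE (Nat.le_succ k)).trans (hWc (k + 1)))
      have h2 := (add_le_add_left (ENNReal.tsum_mono_subtype w (hmerge k))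
        (netContent a T w N (E k))).trans (h1.trans (add_le_add ih (hWs (k + 1))))
      refine (ENNReal.add_le_add_iff_right (hfin k)).1 (h2.trans (le_of_eq ?_))
      rw [Finset.sum_range_succ _ (k + 1)]
      ring
  -- A finite set of maximal words of `⋃ i, W i` is already contained in some `maxWords (U k)`.
  have hlim : ∑' l : maxWords (⋃ i, W i), w l ≤ (⨆ k, netContent a T w N (E k)) + ε := by
    rw [tsum_subtype, ENNReal.tsum_eq_iSup_sum]
    refine iSup_le fun F => ?_
    have hk : ∃ k, ∀ l ∈ F, l ∈ maxWords (⋃ i, W i) → l ∈ maxWords (U k) := by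
      have : ∀ l : List ι, ∃ i, l ∈ maxWords (⋃ i, W i) → l ∈ W i := by
        intro l
        by_cases h : l ∈ maxWords (⋃ i, W i)
        · obtain ⟨i, hi⟩ := mem_iUnion.1 h.1
          exact ⟨i, fun _ => hi⟩
        · exact ⟨0, fun h' => absurd h' h⟩
      choose g hg using this
      refine ⟨F.sup g, fun l hl hm => ⟨⟨g l, Finset.le_sup hl, hg l hm⟩, ?_⟩⟩
      rintro l' ⟨i, _, hl'⟩ hp
      exact hm.2 l' (mem_iUnion.2 ⟨i, hl'⟩) hp
    obtain ⟨k, hk⟩ := hk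
    calc ∑ l ∈ F, (maxWords (⋃ i, W i)).indicator w l
        ≤ ∑ l ∈ F, (maxWords (U k)).indicator w l := by
          refine Finset.sum_le_sum fun l hl => ?_
          by_cases h : l ∈ maxWords (⋃ i, W i)
          · simp [h, hk l hl h]
          · simp [h]
      _ ≤ ∑' l, (maxWords (U k)).indicator w l := ENNReal.sum_le_tsum F
      _ = ∑' l : maxWords (U k), w l := (tsum_subtype _ _).symm
      _ ≤ _ := hcost k
      _ ≤ _ := add_le_add (le_iSup (fun k => netContent a T w N (E k)) k)
          ((ENNReal.sum_le_tsum _).trans hesum.le)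
  refine (netContent_le _ ?_ ?_).trans hlim
  · rintro l ⟨hl, _⟩
    obtain ⟨i, hi⟩ := mem_iUnion.1 hl
    exact hWN i l hi
  · intro x hx
    obtain ⟨k, hk⟩ := mem_iUnion.1 hx
    obtain ⟨l, hl, hxl⟩ := mem_iUnion₂.1 (hWc k hk)
    obtain ⟨l', hl', hp⟩ := exists_maxWords_prefix (⋃ i, W i) (l := l) (mem_iUnion.2 ⟨k, hl⟩)
    exact mem_iUnion₂.2 ⟨l', hl', cyl_anti hp hxl⟩

/-! ### Compact subsets of analytic sets -/

lemma isOpen_cyl [TopologicalSpace X] {a : X → ι} {T : X → X} (hT : Continuous T)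
    (ha : IsLocallyConstant a) (l : List ι) : IsOpen (cyl a T l) := by
  have h : ∀ n, IsLocallyConstant (fun x => itin a T x n) := by
    intro n
    induction n with
    | zero => exact IsLocallyConstant.const ([] : List ι)
    | succ n ih =>
      simp only [itin_succ]
      exact ih.comp₂ (ha.comp_continuous (hT.iterate n)) (fun u v => u ++ [v])
  exact (h l.length).isOpen_fiber l

/-- In `ℕ → ℕ`, an open neighbourhood of the compact box `∏ [0, b i]` contains the set where only
finitely many coordinates are bounded by `b`. -/
lemma exists_box_subset (b : ℕ → ℕ) {U : Set (ℕ → ℕ)} (hU : IsOpen U)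
    (h : {σ : ℕ → ℕ | ∀ i, σ i ≤ b i} ⊆ U) :
    ∃ k, {σ : ℕ → ℕ | ∀ i < k, σ i ≤ b i} ⊆ U := by
  let _ : MetricSpace (ℕ → ℕ) := PiNat.metricSpaceNatNat
  have hc : IsCompact {σ : ℕ → ℕ | ∀ i, σ i ≤ b i} := by
    have := isCompact_univ_pi (fun i => (Set.finite_Iic (b i)).isCompact)
    convert this using 1
    ext σ; simp [Pi.le_def]
  obtain ⟨δ, hδ, hsub⟩ := hc.exists_thickening_subset_open hU h
  obtain ⟨k, hk⟩ := exists_pow_lt_of_lt_one hδ (by norm_num : (1 / 2 : ℝ) < 1)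
  refine ⟨k, fun σ hσ => hsub ?_⟩
  -- Truncating `σ` by `b` gives a point of the box with the same first `k` coordinates.
  refine Metric.mem_thickening_iff.2 ⟨fun i => min (σ i) (b i), fun i => min_le_right _ _, ?_⟩
  refine lt_of_le_of_lt ?_ hk
  refine PiNat.mem_cylinder_iff_dist_le.1 ?_
  intro i hi
  exact (min_eq_left (hσ i hi)).symm

lemma exists_compact_le_netContent [TopologicalSpace X] {a : X → ι} {T : X → X}
    (hT : Continuous T) (ha : IsLocallyConstant a) {w : List ι → ℝ≥0∞} {N : ℕ} {Z : Set X}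
    (hZ : AnalyticSet Z) {c : ℝ≥0∞} (hc : c < netContent a T w N Z) :
    ∃ K ⊆ Z, IsCompact K ∧ c ≤ netContent a T w N K := by
  rw [AnalyticSet] at hZ
  rcases hZ with rfl | ⟨f, hf, rfl⟩
  · exact ⟨∅, Subset.rfl, isCompact_empty, hc.le⟩
  have step : ∀ (S : Set (ℕ → ℕ)) (k : ℕ), ∃ m, c < netContent a T w N (f '' S) →
      c < netContent a T w N (f '' (S ∩ {σ | σ k ≤ m})) := by
    intro S k
    by_cases h : c < netContent a T w N (f '' S)
    · have hU : f '' S = ⋃ m, f '' (S ∩ {σ | σ k ≤ m}) := by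
        rw [← image_iUnion, ← inter_iUnion]
        congr 1
        refine (inter_eq_left.2 fun σ _ => mem_iUnion.2 ⟨σ k, le_refl (σ k)⟩).symm
      have hmono : Monotone fun m => f '' (S ∩ {σ : ℕ → ℕ | σ k ≤ m}) := fun m m' hm =>
        image_mono (inter_subset_inter_right _ fun σ (hσ : σ k ≤ m) => hσ.trans hm)
      rw [hU] at h
      obtain ⟨m, hm⟩ := lt_iSup_iff.1 (h.trans_le (netContent_iUnion_le hmono))
      exact ⟨m, fun _ => hm⟩
    · exact ⟨0, fun h' => absurd h' h⟩
  choose g hg using step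
  let S : ℕ → Set (ℕ → ℕ) := fun k =>
    Nat.rec univ (fun k S => S ∩ {σ | σ k ≤ g S k}) k
  have hS : ∀ k, S (k + 1) = S k ∩ {σ | σ k ≤ g (S k) k} := fun k => rfl
  have hgood : ∀ k, c < netContent a T w N (f '' S k) := by
    intro k
    induction k with
    | zero => simpa [S] using hc
    | succ k ih => rw [hS]; exact hg _ _ ih
  let b : ℕ → ℕ := fun k => g (S k) k
  have hSb : ∀ k, S k = {σ | ∀ i < k, σ i ≤ b i} := by
    intro k
    induction k with
    | zero => simp [S]
    | succ k ih =>
      rw [hS]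
      nth_rewrite 1 [ih]
      ext σ
      simp only [mem_inter_iff, mem_ofPred_eq, Nat.lt_succ_iff_lt_or_eq]
      exact ⟨fun h i hi => hi.elim (h.1 i) fun e => e ▸ h.2,
        fun h => ⟨fun i hi => h i (Or.inl hi), h k (Or.inr rfl)⟩⟩
  have hbox : IsCompact {σ : ℕ → ℕ | ∀ i, σ i ≤ b i} := by
    have := isCompact_univ_pi (fun i => (Set.finite_Iic (b i)).isCompact)
    convert this using 1
    ext σ; simp [Pi.le_def]
  refine ⟨f '' {σ | ∀ i, σ i ≤ b i}, image_subset_range _ _, hbox.image hf, ?_⟩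
  refine le_iInf fun A => le_iInf fun hA => le_iInf fun hcov => ?_
  have hopen : IsOpen (⋃ l ∈ A, cyl a T l) := isOpen_biUnion fun l _ => isOpen_cyl hT ha l
  obtain ⟨k, hk⟩ := exists_box_subset b (hopen.preimage hf) (image_subset_iff.1 hcov)
  rw [← hSb] at hk
  exact (hgood k).le.trans (netContent_le A hA (image_subset_iff.2 hk))

end Net

/-! ### Comparison with Bowen balls -/

section Compare

variable {X : Type*} [MetricSpace X]

/-- The weight `exp (-s n)` of a word of length `n`. -/
noncomputable def wordWeight {ι : Type*} (s : ℝ) (l : List ι) : ℝ≥0∞ :=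
  ENNReal.ofReal (Real.exp (-s * l.length))

lemma Mpre_le_tsum {J : Type*} [Countable J] [Nonempty X] (T : X → X) (s : ℝ) (N : ℕ) (ε : ℝ)
    (Z : Set X) (x : J → X) (n : J → ℕ) (hn : ∀ j, N ≤ n j)
    (hZ : Z ⊆ ⋃ j, bowenBall T (x j) (n j) ε) :
    Mpre T s N ε Z ≤ ∑' j, ENNReal.ofReal (Real.exp (-s * n j)) := by
  classical
  obtain ⟨φ, hφ⟩ := exists_injective_nat J
  have hx : ∀ j, Function.extend φ x (fun _ => Classical.arbitrary X) (φ j) = x j :=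
    fun j => hφ.extend_apply _ _ j
  have hn' : ∀ j, Function.extend φ n (fun _ => 0) (φ j) = n j :=
    fun j => hφ.extend_apply _ _ j
  refine iInf_le_of_le (range φ) (iInf_le_of_le (Function.extend φ x fun _ => Classical.arbitrary X)
    (iInf_le_of_le (Function.extend φ n fun _ => 0) (iInf_le_of_le ?_ (iInf_le_of_le ?_ ?_))))
  · rintro _ ⟨j, rfl⟩
    rw [hn']; exact hn j
  · intro z hz
    obtain ⟨j, hj⟩ := mem_iUnion.1 (hZ hz)
    refine mem_iUnion₂.2 ⟨φ j, ⟨j, rfl⟩, ?_⟩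
    rw [hx, hn']; exact hj
  · rw [tsum_range (fun i => ENNReal.ofReal (Real.exp (-s * Function.extend φ n (fun _ => 0) i))) hφ]
    simp only [hn', le_refl]

/-- If points with the same label are `ε`-close, a cylinder of length `n` lies in the Bowen ball
`B_n(x, ε)` around each of its points `x`. -/
lemma Mpre_le_netContent {ι : Type*} [Countable ι] [Nonempty X] {a : X → ι} {T : X → X} {ε : ℝ}
    (ha : ∀ x y, a x = a y → dist x y < ε) (s : ℝ) (N : ℕ) (Z : Set X) :
    Mpre T s N ε Z ≤ netContent a T (wordWeight s) N Z := by
  classical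
  refine le_iInf fun A => le_iInf fun hA => le_iInf fun hcov => ?_
  choose p hp using fun l : List ι => (em (cyl a T l).Nonempty).elim
    (fun h => (⟨h.some, fun _ => h.some_mem⟩ : ∃ x, (cyl a T l).Nonempty → x ∈ cyl a T l))
    (fun h => ⟨Classical.arbitrary X, fun h' => absurd h' h⟩)
  refine Mpre_le_tsum T s N ε Z (fun l : A => p l) (fun l : A => l.1.length)
    (fun l => hA l l.2) fun z hz => ?_
  obtain ⟨l, hl, hzl⟩ := mem_iUnion₂.1 (hcov hz)
  refine mem_iUnion.2 ⟨⟨l, hl⟩, fun k hk => ha _ _ ?_⟩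
  have h1 : itin a T (p l) l.length = l := hp l ⟨z, hzl⟩
  have h2 : itin a T z l.length = l := hzl
  exact itin_eq_iff.1 (h1.trans h2.symm) k hk

/-- If `δ`-close points have the same label, the Bowen ball `B_n(x, δ)` lies in the cylinder of
length `n` around `x`. -/
lemma netContent_le_Mpre {ι : Type*} {a : X → ι} {T : X → X} {δ : ℝ}
    (ha : ∀ x y, dist x y < δ → a x = a y) (s : ℝ) (N : ℕ) (Z : Set X) :
    netContent a T (wordWeight s) N Z ≤ Mpre T s N δ Z := by
  refine le_iInf fun I => le_iInf fun x => le_iInf fun n => le_iInf fun hn => le_iInf fun hcov => ?_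
  let φ : I → List ι := fun i => itin a T (x i) (n i)
  refine (netContent_le (range φ) ?_ ?_).trans ?_
  · rintro _ ⟨i, rfl⟩
    simpa [φ] using hn i i.2
  · intro z hz
    obtain ⟨i, hi, hzi⟩ := mem_iUnion₂.1 (hcov hz)
    refine mem_iUnion₂.2 ⟨φ ⟨i, hi⟩, ⟨_, rfl⟩, ?_⟩
    have : itin a T z (n i) = itin a T (x i) (n i) :=
      itin_eq_iff.2 fun k hk => (ha _ _ (hzi k hk)).symm
    simpa [cyl, φ] using this
  · refine (ENNReal.tsum_le_tsum_comp_of_surjective (rangeFactorization_surjective (f := φ))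
      (fun l : range φ => wordWeight s l.1)).trans (le_of_eq ?_)
    simp [wordWeight, φ, rangeFactorization]

/-! ### Varying the exponent -/

lemma Mpre_mono_N (T : X → X) (s : ℝ) (ε : ℝ) (Z : Set X) {N N' : ℕ} (h : N ≤ N') :
    Mpre T s N ε Z ≤ Mpre T s N' ε Z :=
  le_iInf fun I => le_iInf fun x => le_iInf fun n => le_iInf fun hn => le_iInf fun hcov =>
    iInf_le_of_le I (iInf_le_of_le x (iInf_le_of_le n
      (iInf_le_of_le (fun i hi => h.trans (hn i hi)) (iInf_le _ hcov))))

lemma Mpre_mul_le (T : X → X) {s t : ℝ} (hts : t ≤ s) (ε : ℝ) (Z : Set X) (N : ℕ) :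
    ENNReal.ofReal (Real.exp ((s - t) * N)) * Mpre T s N ε Z ≤ Mpre T t N ε Z := by
  refine le_iInf fun I => le_iInf fun x => le_iInf fun n => le_iInf fun hn => le_iInf fun hcov => ?_
  have h1 : Mpre T s N ε Z ≤ ∑' i : I, ENNReal.ofReal (Real.exp (-s * n i)) :=
    iInf_le_of_le I (iInf_le_of_le x (iInf_le_of_le n (iInf_le_of_le hn (iInf_le _ hcov))))
  refine (mul_le_mul_right h1 _).trans ?_
  rw [← ENNReal.tsum_mul_left]
  refine ENNReal.tsum_le_tsum fun i => ?_
  rw [← ENNReal.ofReal_mul (Real.exp_pos _).le, ← Real.exp_add]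
  refine ENNReal.ofReal_le_ofReal (Real.exp_le_exp.2 ?_)
  have : (N : ℝ) ≤ n i := by exact_mod_cast hn i i.2
  nlinarith [mul_le_mul_of_nonneg_left this (sub_nonneg.2 hts)]

/-- Positivity of `M^s_ε(K)` makes `s` a lower bound for the entropy of `K`. -/
lemma le_bowenEntropy_of_Mpre_pos {T : X → X} {s ε : ℝ} (hε : 0 < ε) {N : ℕ} {K : Set X}
    (h : 0 < Mpre T s N ε K) : ENNReal.ofReal s ≤ bowenEntropy T K := by
  have key : ∀ t < s, ENNReal.ofReal t ≤ bowenEntropy T K := by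
    intro t hts
    refine le_iSup₂_of_le t ?_ le_rfl
    have hlim : Tendsto (fun n : ℕ => ENNReal.ofReal (Real.exp ((s - t) * n)) * Mpre T s N ε K)
        atTop (𝓝 (∞ * Mpre T s N ε K)) := by
      refine ENNReal.Tendsto.mul_const ?_ (Or.inl ENNReal.top_ne_zero)
      refine ENNReal.tendsto_ofReal_atTop.comp (Real.tendsto_exp_atTop.comp ?_)
      exact tendsto_natCast_atTop_atTop.const_mul_atTop (sub_pos.2 hts)
    rw [ENNReal.top_mul h.ne'] at hlim
    refine top_le_iff.1 (le_of_tendsto hlim ?_)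
    filter_upwards [eventually_ge_atTop N] with n hn
    calc ENNReal.ofReal (Real.exp ((s - t) * n)) * Mpre T s N ε K
        ≤ ENNReal.ofReal (Real.exp ((s - t) * n)) * Mpre T s n ε K :=
          mul_le_mul_right (Mpre_mono_N T s ε K hn) _
      _ ≤ Mpre T t n ε K := Mpre_mul_le T hts.le ε K n
      _ ≤ MpreEps T t ε K := le_iSup (fun N => Mpre T t N ε K) n
      _ ≤ Mtop T t K := le_iSup₂ (f := fun ε (_ : 0 < ε) => MpreEps T t ε K) ε hε
  have hlim : Tendsto (fun t : ℝ => ENNReal.ofReal t) (𝓝[<] s) (𝓝 (ENNReal.ofReal s)) :=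
    (ENNReal.continuous_ofReal.tendsto s).mono_left nhdsWithin_le_nhds
  exact le_of_tendsto hlim (eventually_nhdsWithin_of_forall key)

lemma Mpre_mono_set (T : X → X) (s : ℝ) (N : ℕ) (ε : ℝ) {K Z : Set X} (h : K ⊆ Z) :
    Mpre T s N ε K ≤ Mpre T s N ε Z :=
  le_iInf fun I => le_iInf fun x => le_iInf fun n => le_iInf fun hn => le_iInf fun hcov =>
    iInf_le_of_le I (iInf_le_of_le x (iInf_le_of_le n
      (iInf_le_of_le hn (iInf_le _ (h.trans hcov)))))

lemma bowenEntropy_mono (T : X → X) {K Z : Set X} (h : K ⊆ Z) :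
    bowenEntropy T K ≤ bowenEntropy T Z := by
  refine iSup₂_le fun s hs => le_iSup₂_of_le s ?_ le_rfl
  refine top_le_iff.1 (hs ▸ ?_)
  exact iSup₂_mono fun ε _ => iSup_mono fun N => Mpre_mono_set T s N ε h

end Compare

/-- **Feng–Huang, Theorem 3.5**: if `(X,T)` is a topological dynamical system with `X`
zero-dimensional (for every `δ > 0` there is a finite partition of `X` into closed-open
sets of diameter less than `δ`), then for every analytic set `Z ⊆ X`,
`h^B_top(T,Z) = sup { h^B_top(T,K) : K ⊆ Z compact }`. -/
theorem bowenEntropy_analytic_eq_iSup_compact_of_zeroDimensional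
    {X : Type*} [MetricSpace X] [CompactSpace X]
    (T : X → X) (hT : Continuous T)
    (hzero : ∀ δ : ℝ, 0 < δ → ∃ P : Finset (Set X),
      (∀ U ∈ P, IsClopen U ∧ Metric.diam U < δ) ∧
      (P : Set (Set X)).PairwiseDisjoint id ∧ ⋃₀ (P : Set (Set X)) = Set.univ)
    (Z : Set X) (hZ : MeasureTheory.AnalyticSet Z) :
    bowenEntropy T Z = ⨆ (K : Set X) (_ : K ⊆ Z) (_ : IsCompact K), bowenEntropy T K := by
  refine le_antisymm ?_ (iSup_le fun K => iSup_le fun hK => iSup_le fun _ => bowenEntropy_mono T hK)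
  -- In the empty space there is no sequence of centres, so every `Mpre` is `∞`; but then `Z` is compact.
  rcases isEmpty_or_nonempty X with hX | hX
  · exact le_iSup_of_le Z (le_iSup_of_le Subset.rfl (le_iSup_of_le (Set.toFinite Z).isCompact le_rfl))
  refine iSup₂_le fun s hs => ?_
  have hpos : 0 < Mtop T s Z := hs ▸ ENNReal.zero_lt_top
  obtain ⟨ε, hpos⟩ := lt_iSup_iff.1 hpos
  obtain ⟨hε, hpos⟩ := lt_iSup_iff.1 hpos
  obtain ⟨N, hpos⟩ := lt_iSup_iff.1 hpos
  obtain ⟨P, hP, hdisj, hcov⟩ := hzero ε hε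
  have hex : ∀ x, ∃ U : P, x ∈ (U : Set X) := fun x => by
    obtain ⟨U, hU, hx⟩ := mem_sUnion.1 (hcov.symm ▸ mem_univ x)
    exact ⟨⟨U, hU⟩, hx⟩
  -- `a x` is the atom of the partition containing `x`.
  choose a ha using hex
  have hauniq : ∀ x (U : P), x ∈ (U : Set X) → a x = U := fun x U hx => by
    by_contra hne
    exact (disjoint_left.1 (hdisj (a x).2 U.2 fun e => hne (Subtype.ext e))) (ha x) hx
  have hloc : IsLocallyConstant a := (IsLocallyConstant.iff_exists_open a).2 fun x =>
    ⟨a x, (hP _ (a x).2).1.isOpen, ha x, fun y hy => hauniq y _ hy⟩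
  have hsmall : ∀ x y, a x = a y → dist x y < ε := fun x y hxy =>
    (Metric.dist_le_diam_of_mem (Metric.isBounded_of_compactSpace) (ha x) (hxy ▸ ha y)).trans_lt
      (hP _ (a x).2).2
  obtain ⟨δ, hδ, hleb⟩ := lebesgue_number_lemma_of_metric_sUnion (s := univ)
    (c := (P : Set (Set X))) isCompact_univ (fun U hU => (hP U hU).1.isOpen) hcov.ge
  have hclose : ∀ x y, dist x y < δ → a x = a y := fun x y hxy => by
    obtain ⟨U, hU, hb⟩ := hleb x (mem_univ x)
    rw [hauniq x ⟨U, hU⟩ (hb (Metric.mem_ball_self hδ)),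
      hauniq y ⟨U, hU⟩ (hb (Metric.mem_ball'.2 hxy))]
  obtain ⟨c, hc0, hc⟩ := exists_between (hpos.trans_le (Mpre_le_netContent hsmall s N Z))
  obtain ⟨K, hKZ, hK, hcK⟩ := exists_compact_le_netContent hT hloc hZ hc
  refine le_iSup_of_le K (le_iSup_of_le hKZ (le_iSup_of_le hK ?_))
  exact le_bowenEntropy_of_Mpre_pos hδ
    (hc0.trans_le (hcK.trans (netContent_le_Mpre hclose s N K)))
end

section
/- Increasing sets lemma: Let (X,T) be a topological dynamical system and 𝒰 a finite partition of X into closed-open sets. Let s ≥ 0 and N ∈ ℕ. If E_1 ⊆ E_2 ⊆ ⋯ are subsets of X and E = ⋃_i E_i, then M^s_N(𝒰, E) = lim_{i→∞} M^s_N(𝒰, E_i). -/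
/-!
Two cylinders `X(u)`, `X(v)` over a partition that share a point have prefix-comparable strings.
Hence, if `A` covers `Y` and `B` covers `Z`, the prefix-minimal strings of `A ∪ B` cover `Y ∪ Z`,
while the remaining strings (those of `A ∩ B` and the non-minimal ones) still cover `Y ∩ Z`, and
the two families together cost no more than `A` and `B` together (`cost_minimal_add_cost_rest_le`,
`rest_covers`).

Choose covers `Λ n` of `E n` of cost at most `M(E n) + δ n` with `∑ δ n < ε`, and merge them one
at a time, keeping only prefix-minimal strings (`merged`). The rest at step `n + 1` covers `E n`,
so it costs at least `M(E n)`; by induction the `n`-th merged family costs at most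
`M(E n) + ∑_{i ≤ n} δ i`. For a point `x` of the union, the shortest string of `⋃ Λ n` whose
cylinder contains `x` is never removed once it has appeared. So the strings that are eventually in
all merged families cover the union, and a Fatou-type argument (`cost_eventually_le`) bounds their
cost by `sup M(E n) + ε`.
-/

open Filter Set MeasureTheory Topology
open scoped ENNReal NNReal

section CoverMeasure

variable {X : Type*} [MetricSpace X]

/-- For a string `u = U₁…U_n` of elements of a cover, the set
`X(u) = U₁ ∩ T⁻¹U₂ ∩ ⋯ ∩ T^{-(n-1)}U_n`. -/
def stringSet (T : X → X) : List (Set X) → Set X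
  | [] => Set.univ
  | U :: l => U ∩ T ⁻¹' stringSet T l

/-- `M^s_N(𝒰, Z) = inf_Λ Σ_{u ∈ Λ} e^{-s·m(u)}`, the infimum being over all families
`Λ` of strings of elements of `𝒰`, each of length `m(u) ≥ N`, such that the sets `X(u)`,
`u ∈ Λ`, cover `Z`. -/
noncomputable def coverM (T : X → X) (U : Finset (Set X)) (s : ℝ) (N : ℕ) (Z : Set X) :
    ℝ≥0∞ :=
  ⨅ (Λ : Set (List (Set X)))
    (_ : ∀ u ∈ Λ, (∀ V ∈ u, V ∈ U) ∧ N ≤ u.length)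
    (_ : Z ⊆ ⋃ u ∈ Λ, stringSet T u),
    ∑' u : Λ, ENNReal.ofReal (Real.exp (-s * (u : List (Set X)).length))

end CoverMeasure

section Helpers

variable {X : Type*}

/-- A family admissible for `M^s_N(𝒰, ·)`: strings with letters in `U` and length at least `N`. -/
def Admissible (U : Finset (Set X)) (N : ℕ) (Λ : Set (List (Set X))) : Prop :=
  ∀ u ∈ Λ, (∀ V ∈ u, V ∈ U) ∧ N ≤ u.length

/-- The set `⋃_{u ∈ Λ} X(u)` covered by a family of strings. -/
def covered (T : X → X) (Λ : Set (List (Set X))) : Set X := ⋃ u ∈ Λ, stringSet T u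

/-- Total weight of a family of strings, written as a sum over all strings so that families can be
compared pointwise. -/
noncomputable def cost {α : Type*} (w : α → ℝ≥0∞) (Λ : Set α) : ℝ≥0∞ := ∑' u, Λ.indicator w u

/-- The weight `e^{-s·m(u)}` of a string. -/
noncomputable def weight (s : ℝ) (u : List (Set X)) : ℝ≥0∞ :=
  ENNReal.ofReal (Real.exp (-s * u.length))

/-- The strings of `Λ` without a proper prefix in `Λ`. -/
def prefixMinimal {α : Type*} (Λ : Set (List α)) : Set (List α) :=
  {u | u ∈ Λ ∧ ∀ v ∈ Λ, v <+: u → v = u}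

/-- What is left of `A` and `B`, counted with multiplicity, when one copy of each prefix-minimal
string of `A ∪ B` is taken away. -/
def rest {α : Type*} (A B : Set (List α)) : Set (List α) :=
  (A ∩ B) ∪ ((A ∪ B) \ prefixMinimal (A ∪ B))

/-- Successive merging of the families `Λ 0, Λ 1, …`, keeping only prefix-minimal strings at each
step. -/
def merged {α : Type*} (Λ : ℕ → Set (List α)) : ℕ → Set (List α)
  | 0 => Λ 0
  | n + 1 => prefixMinimal (merged Λ n ∪ Λ (n + 1))

lemma mem_covered {T : X → X} {Λ : Set (List (Set X))} {x : X} :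
    x ∈ covered T Λ ↔ ∃ u ∈ Λ, x ∈ stringSet T u := by
  simp [covered]

lemma stringSet_subset_of_prefix (T : X → X) {u v : List (Set X)} (h : u <+: v) :
    stringSet T v ⊆ stringSet T u := by
  induction u generalizing v with
  | nil => intro x _; trivial
  | cons a u ih =>
    obtain ⟨t, rfl⟩ := h
    rintro x ⟨hx, hx'⟩
    exact ⟨hx, ih (List.prefix_append u t) hx'⟩

lemma prefix_or_prefix_of_mem {T : X → X} {U : Finset (Set X)}
    (hU : (U : Set (Set X)).PairwiseDisjoint id) {u v : List (Set X)}
    (hu : ∀ V ∈ u, V ∈ U) (hv : ∀ V ∈ v, V ∈ U) {x : X}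
    (hxu : x ∈ stringSet T u) (hxv : x ∈ stringSet T v) : u <+: v ∨ v <+: u := by
  induction u generalizing v x with
  | nil => exact Or.inl List.nil_prefix
  | cons a u ih =>
    cases v with
    | nil => exact Or.inr List.nil_prefix
    | cons b v =>
      have hab : a = b :=
        hU.elim_set (hu a (by simp)) (hv b (by simp)) x hxu.1 hxv.1
      subst hab
      have := ih (fun V hV => hu V (by simp [hV])) (fun V hV => hv V (by simp [hV]))
        hxu.2 hxv.2
      simpa [List.cons_prefix_cons] using this

lemma coverM_le_cost {T : X → X} {U : Finset (Set X)} {s : ℝ} {N : ℕ} {Z : Set X}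
    {Λ : Set (List (Set X))} (hΛ : Admissible U N Λ) (hZ : Z ⊆ covered T Λ) :
    coverM T U s N Z ≤ cost (weight s) Λ := by
  have h : cost (weight s) Λ
      = ∑' u : Λ, ENNReal.ofReal (Real.exp (-s * (u : List (Set X)).length)) :=
    (tsum_subtype Λ (weight s)).symm
  rw [h]
  exact iInf_le_of_le Λ (iInf_le_of_le hΛ (iInf_le_of_le hZ le_rfl))

lemma exists_cost_lt {T : X → X} {U : Finset (Set X)} {s : ℝ} {N : ℕ} {Z : Set X} {c : ℝ≥0∞}
    (h : coverM T U s N Z < c) :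
    ∃ Λ, Admissible U N Λ ∧ Z ⊆ covered T Λ ∧ cost (weight s) Λ < c := by
  simp only [coverM, iInf_lt_iff] at h
  obtain ⟨Λ, h1, h2, h3⟩ := h
  refine ⟨Λ, h1, h2, ?_⟩
  have h : cost (weight s) Λ
      = ∑' u : Λ, ENNReal.ofReal (Real.exp (-s * (u : List (Set X)).length)) :=
    (tsum_subtype Λ (weight s)).symm
  rwa [h]

lemma coverM_mono {T : X → X} {U : Finset (Set X)} {s : ℝ} {N : ℕ} {Y Z : Set X} (h : Y ⊆ Z) :
    coverM T U s N Y ≤ coverM T U s N Z := by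
  refine le_of_forall_gt fun c hc => ?_
  obtain ⟨Λ, h1, h2, h3⟩ := exists_cost_lt hc
  exact (coverM_le_cost h1 (h.trans h2)).trans_lt h3

lemma prefixMinimal_subset {α : Type*} (Λ : Set (List α)) : prefixMinimal Λ ⊆ Λ := fun _ h => h.1

/-- A shortest string among those whose cylinder contains a given point is prefix-minimal. -/
lemma mem_prefixMinimal_of_shortest {T : X → X} {Λ : Set (List (Set X))} {u : List (Set X)} {x : X}
    (hu : u ∈ Λ) (hx : x ∈ stringSet T u)
    (hmin : ∀ v ∈ Λ, x ∈ stringSet T v → u.length ≤ v.length) : u ∈ prefixMinimal Λ :=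
  ⟨hu, fun v hv hvu => hvu.eq_of_length_le (hmin v hv (stringSet_subset_of_prefix T hvu hx))⟩

lemma exists_shortest {T : X → X} {Λ : Set (List (Set X))} {x : X} (hx : x ∈ covered T Λ) :
    ∃ u ∈ Λ, x ∈ stringSet T u ∧ ∀ v ∈ Λ, x ∈ stringSet T v → u.length ≤ v.length := by
  obtain ⟨u₀, h₀, hx₀⟩ := mem_covered.1 hx
  obtain ⟨u, hu, hmin⟩ := exists_minimalFor_of_wellFoundedLT
    (fun u => u ∈ Λ ∧ x ∈ stringSet T u) List.length ⟨u₀, h₀, hx₀⟩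
  refine ⟨u, hu.1, hu.2, fun v hv hxv => ?_⟩
  by_contra! hlt
  exact absurd (hmin ⟨hv, hxv⟩ hlt.le) (not_le.2 hlt)

lemma covered_subset_prefixMinimal (T : X → X) (Λ : Set (List (Set X))) :
    covered T Λ ⊆ covered T (prefixMinimal Λ) := fun _ hx => by
  obtain ⟨u, hu, hxu, hmin⟩ := exists_shortest hx
  exact mem_covered.2 ⟨u, mem_prefixMinimal_of_shortest hu hxu hmin, hxu⟩

lemma cost_minimal_add_cost_rest_le {α : Type*} (w : List α → ℝ≥0∞) (A B : Set (List α)) :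
    cost w (prefixMinimal (A ∪ B)) + cost w (rest A B) ≤ cost w A + cost w B := by
  classical
  simp only [cost]
  rw [← ENNReal.tsum_add, ← ENNReal.tsum_add]
  refine ENNReal.tsum_le_tsum fun u => ?_
  have hmem : u ∈ prefixMinimal (A ∪ B) → u ∈ A ∨ u ∈ B := fun h => h.1
  by_cases hP : u ∈ prefixMinimal (A ∪ B) <;> by_cases hA : u ∈ A <;> by_cases hB : u ∈ B <;>
    simp [Set.indicator, rest, hP, hA, hB] at hmem ⊢

lemma rest_covers {T : X → X} {U : Finset (Set X)} {N : ℕ}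
    (hU : (U : Set (Set X)).PairwiseDisjoint id) {A B : Set (List (Set X))}
    (hA : Admissible U N A) (hB : Admissible U N B) :
    covered T A ∩ covered T B ⊆ covered T (rest A B) := by
  rintro x ⟨hxA, hxB⟩
  obtain ⟨u, hu, hxu⟩ := mem_covered.1 hxA
  obtain ⟨v, hv, hxv⟩ := mem_covered.1 hxB
  by_cases huv : u = v
  · subst huv
    exact mem_covered.2 ⟨u, Or.inl ⟨hu, hv⟩, hxu⟩
  -- The longer of the two strings has the other one as a proper prefix, so it is not minimal.
  rcases prefix_or_prefix_of_mem hU (hA u hu).1 (hB v hv).1 hxu hxv with h | h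
  · exact mem_covered.2 ⟨v, Or.inr ⟨Or.inr hv, fun hP => huv (hP.2 u (Or.inl hu) h)⟩, hxv⟩
  · exact mem_covered.2
      ⟨u, Or.inr ⟨Or.inl hu, fun hP => huv (hP.2 v (Or.inr hv) h).symm⟩, hxu⟩

lemma merged_subset {α : Type*} (Λ : ℕ → Set (List α)) (n : ℕ) : merged Λ n ⊆ ⋃ i, Λ i := by
  induction n with
  | zero => exact subset_iUnion Λ 0
  | succ n ih =>
    exact (prefixMinimal_subset _).trans (union_subset ih (subset_iUnion Λ (n + 1)))

lemma admissible_iUnion {U : Finset (Set X)} {N : ℕ} {Λ : ℕ → Set (List (Set X))}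
    (h : ∀ n, Admissible U N (Λ n)) : Admissible U N (⋃ i, Λ i) := fun u hu => by
  obtain ⟨i, hi⟩ := mem_iUnion.1 hu
  exact h i u hi

lemma covered_mono (T : X → X) {A B : Set (List (Set X))} (h : A ⊆ B) :
    covered T A ⊆ covered T B :=
  biUnion_subset_biUnion_left h

lemma covered_subset_merged (T : X → X) (Λ : ℕ → Set (List (Set X))) (n : ℕ) :
    covered T (Λ n) ⊆ covered T (merged Λ n) := by
  cases n with
  | zero => exact subset_rfl
  | succ n =>
    exact (covered_mono T subset_union_right).trans (covered_subset_prefixMinimal T _)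

/-- A shortest string of `⋃ Λ n` whose cylinder contains a given point survives every merging
step after its first appearance. -/
lemma eventually_mem_merged {T : X → X} {Λ : ℕ → Set (List (Set X))} {x : X} {u : List (Set X)}
    (hu : u ∈ ⋃ i, Λ i) (hx : x ∈ stringSet T u)
    (hmin : ∀ v ∈ ⋃ i, Λ i, x ∈ stringSet T v → u.length ≤ v.length) :
    ∀ᶠ n in atTop, u ∈ merged Λ n := by
  have step : ∀ n, u ∈ merged Λ n ∪ Λ (n + 1) → u ∈ merged Λ (n + 1) := fun n h =>
    mem_prefixMinimal_of_shortest h hx fun v hv =>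
      hmin v (union_subset (merged_subset Λ n) (subset_iUnion Λ (n + 1)) hv)
  obtain ⟨i, hi⟩ := mem_iUnion.1 hu
  refine eventually_atTop.2 ⟨i, fun n hn => ?_⟩
  induction n, hn using Nat.le_induction with
  | base =>
    cases i with
    | zero => exact hi
    | succ i => exact step i (Or.inr hi)
  | succ n _ ih => exact step n (Or.inl ih)

lemma cost_eventually_le {α : Type*} (w : α → ℝ≥0∞) (Γ : ℕ → Set α) {c : ℝ≥0∞}
    (hc : ∀ n, cost w (Γ n) ≤ c) : cost w {u | ∀ᶠ n in atTop, u ∈ Γ n} ≤ c := by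
  classical
  refine ENNReal.summable.tsum_le_of_sum_le fun F => ?_
  have hF : ∀ᶠ n in atTop, ∀ u ∈ F, (∀ᶠ n in atTop, u ∈ Γ n) → u ∈ Γ n := by
    refine (Finset.eventually_all F).2 fun u _ => ?_
    by_cases hu : ∀ᶠ n in atTop, u ∈ Γ n
    · exact hu.mono fun n hn _ => hn
    · exact Eventually.of_forall fun n h => absurd h hu
  obtain ⟨n, hn⟩ := hF.exists
  refine le_trans (Finset.sum_le_sum fun u hu => ?_) ((ENNReal.sum_le_tsum F).trans (hc n))
  by_cases h : ∀ᶠ n in atTop, u ∈ Γ n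
  · rw [Set.indicator_of_mem (show u ∈ {u | ∀ᶠ n in atTop, u ∈ Γ n} from h),
      Set.indicator_of_mem (hn u hu h)]
  · rw [Set.indicator_of_notMem (show u ∉ {u | ∀ᶠ n in atTop, u ∈ Γ n} from h)]
    exact zero_le

lemma cost_merged_le {T : X → X} {U : Finset (Set X)} {s : ℝ} {N : ℕ}
    (hU : (U : Set (Set X)).PairwiseDisjoint id) {E : ℕ → Set X} (hE : Monotone E)
    {Λ : ℕ → Set (List (Set X))} {δ : ℕ → ℝ≥0∞}
    (hfin : ∀ n, coverM T U s N (E n) ≠ ⊤)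
    (hadm : ∀ n, Admissible U N (Λ n)) (hcov : ∀ n, E n ⊆ covered T (Λ n))
    (hcost : ∀ n, cost (weight s) (Λ n) ≤ coverM T U s N (E n) + δ n) (n : ℕ) :
    cost (weight s) (merged Λ n) ≤
      coverM T U s N (E n) + ∑ i ∈ Finset.range (n + 1), δ i := by
  induction n with
  | zero => simpa [merged] using hcost 0
  | succ n ih =>
    have hadm' : Admissible U N (merged Λ n) := fun u hu =>
      admissible_iUnion hadm u (merged_subset Λ n hu)
    have hrest : Admissible U N (rest (merged Λ n) (Λ (n + 1))) := by
      rintro u (hu | hu)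
      · exact hadm' u hu.1
      · exact hu.1.elim (hadm' u) (hadm (n + 1) u)
    have hlow : coverM T U s N (E n) ≤ cost (weight s) (rest (merged Λ n) (Λ (n + 1))) :=
      coverM_le_cost hrest <| (subset_inter ((hcov n).trans (covered_subset_merged T Λ n))
        ((hE n.le_succ).trans (hcov (n + 1)))).trans (rest_covers hU hadm' (hadm (n + 1)))
    refine (ENNReal.add_le_add_iff_right (hfin n)).1 ?_
    calc cost (weight s) (merged Λ (n + 1)) + coverM T U s N (E n)
        ≤ cost (weight s) (prefixMinimal (merged Λ n ∪ Λ (n + 1)))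
          + cost (weight s) (rest (merged Λ n) (Λ (n + 1))) := by
          gcongr; exact le_rfl
      _ ≤ cost (weight s) (merged Λ n) + cost (weight s) (Λ (n + 1)) :=
          cost_minimal_add_cost_rest_le _ _ _
      _ ≤ (coverM T U s N (E n) + ∑ i ∈ Finset.range (n + 1), δ i)
          + (coverM T U s N (E (n + 1)) + δ (n + 1)) := add_le_add ih (hcost (n + 1))
      _ = _ := by rw [Finset.sum_range_succ _ (n + 1)]; ring

end Helpers

/-- **Increasing sets lemma** (Feng–Huang, Proposition 3.6(i)): let `(X,T)` be a
topological dynamical system and `𝒰` a finite partition of `X` into closed-open sets.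
If `E₁ ⊆ E₂ ⊆ ⋯` and `E = ⋃_i E_i`, then `M^s_N(𝒰, E) = lim_{i→∞} M^s_N(𝒰, E_i)`
(the sequence being nondecreasing, its limit is its supremum). -/
theorem coverM_iUnion_of_monotone
    {X : Type*} [MetricSpace X] [CompactSpace X]
    (T : X → X) (hT : Continuous T)
    (U : Finset (Set X)) (hUclopen : ∀ V ∈ U, IsClopen V)
    (hUdisj : (U : Set (Set X)).PairwiseDisjoint id)
    (hUcover : ⋃₀ (U : Set (Set X)) = Set.univ)
    (s : ℝ) (hs : 0 ≤ s) (N : ℕ)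
    (E : ℕ → Set X) (hE : Monotone E) :
    coverM T U s N (⋃ i, E i) = ⨆ i, coverM T U s N (E i) := by
  refine le_antisymm ?_ (iSup_le fun i => coverM_mono (subset_iUnion E i))
  by_cases htop : ⨆ i, coverM T U s N (E i) = ⊤
  · rw [htop]; exact le_top
  have hfin : ∀ n, coverM T U s N (E n) ≠ ⊤ := fun n =>
    ne_top_of_le_ne_top htop (le_iSup (fun i => coverM T U s N (E i)) n)
  refine ENNReal.le_of_forall_pos_le_add fun ε hε _ => ?_
  obtain ⟨δ, hδ, hδε⟩ := ENNReal.exists_pos_sum_of_countable'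
    (ENNReal.coe_pos.2 hε).ne' ℕ
  choose Λ hadm hcov hcost using fun n =>
    exists_cost_lt (ENNReal.lt_add_right (hfin n) (hδ n).ne')
  have hbound : ∀ n, cost (weight s) (merged Λ n) ≤ (⨆ i, coverM T U s N (E i)) + ε := fun n =>
    (cost_merged_le hUdisj hE hfin hadm hcov (fun n => (hcost n).le) n).trans
      (add_le_add (le_iSup (fun i => coverM T U s N (E i)) n)
        ((ENNReal.sum_le_tsum _).trans hδε.le))
  refine (coverM_le_cost (Λ := {u | ∀ᶠ n in atTop, u ∈ merged Λ n}) ?_ ?_).trans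
    (cost_eventually_le _ _ hbound)
  · intro u hu
    obtain ⟨n, hn⟩ := Eventually.exists hu
    exact admissible_iUnion hadm u (merged_subset Λ n hn)
  · intro x hx
    obtain ⟨i, hi⟩ := mem_iUnion.1 hx
    obtain ⟨u, hu, hxu, hmin⟩ :=
      exists_shortest (covered_mono T (subset_iUnion Λ i) (hcov i hi))
    exact mem_covered.2 ⟨u, eventually_mem_merged hu hxu hmin, hxu⟩
end

section
/- Let (X,T) be a topological dynamical system with finite topological entropy h_top(T) < ∞. Then there exists a topological dynamical system (H,Γ) with H zero-dimensional and a factor map π : (H,Γ) → (X,T) such that sup_{x∈X} h^{UC}_top(Γ, π^{−1}(x)) = 0. -/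
/-!
The extension codes the orbit of `x` by the sides of thresholds `r i` on which the values of
countably many functions `f i` lie, both sides being allowed on the threshold itself. For the fibres to
have zero entropy, orbits must meet each threshold with frequency zero. A fixed level need
not have this property, so the thresholds are made to move in time, driven by the
zero-entropy translation `g ↦ g + 1` on the product of all finite cyclic groups.

A moving threshold (`MovingThreshold`) is given by nested intervals depending continuously on `g`.
In the refinement step (`exists_refined_interval`) the current interval is divided
into `M` separated subintervals, and for some period `N` one of them is chosen for each residue
modulo `N`. A value of `f` lies in at most one of them, so a random choice is hit more than
`N / D` times along a given orbit piece of length `N` with probability at most about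
`2 ^ N * M ^ (-N / D)`. Finite entropy bounds the number of orbit pieces that need to be
considered by `C * b ^ N` with `b` independent of the scale (`exists_hasExpCovers`, obtained from
Bowen's variable-length covers by concatenation). For `M` large in terms of `b` and `D`, some
choice works for all orbits at once (`exists_choice_few_hits`).

The space `H` consists of triples (point, phase, side sequences). Phase and sides determine the
point when the thresholds separate points, so the finite symbolic codes `extensionCode`
give clopen partitions of arbitrarily small diameter. Over a fixed `x`, a word of length `n` for one
threshold is determined by one of finitely many interval patterns and by its letters
at the at most `n / D + O(1)` ambiguous times (`MovingThreshold.patterns_card_pow_le`); since `D` is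
arbitrary, the fibre entropy vanishes.
-/

open Filter Set MeasureTheory Topology
open scoped ENNReal NNReal

/-! ### Finite entropy: covers by Bowen-small sets -/

lemma bowenBall_isOpen {X : Type*} [MetricSpace X] {T : X → X} (hT : Continuous T)
    (x : X) (n : ℕ) (ε : ℝ) : IsOpen (bowenBall T x n ε) := by
  have : bowenBall T x n ε = ⋂ k ∈ Finset.range n, {y | dist (T^[k] x) (T^[k] y) < ε} := by
    ext y; simp [bowenBall]
  rw [this]
  refine isOpen_biInter_finset fun k _ => ?_
  exact isOpen_lt (continuous_const.dist (hT.iterate k)) continuous_const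

/-- `X` is covered by at most `C * b ^ L` sets whose diameter in the `L`-th Bowen metric is
at most `ε`, with a growth rate `b` independent of `ε`. -/
def HasExpCovers {X : Type*} [MetricSpace X] (T : X → X) (b : ℕ) : Prop :=
  ∀ ε : ℝ, 0 < ε → ∃ C : ℕ, ∀ L : ℕ, ∃ 𝒱 : Finset (Set X),
    (∀ x, ∃ V ∈ 𝒱, x ∈ V) ∧
    (∀ V ∈ 𝒱, ∀ x ∈ V, ∀ y ∈ V, ∀ k < L, dist (T^[k] x) (T^[k] y) < ε) ∧
    𝒱.card ≤ C * b ^ L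

/-- Concatenation of Bowen balls: a finite cover by sets `W i` that are small for times
`< n i`, with `∑ b ^ (-n i) ≤ 1`, yields covers for every length `L`. An orbit is followed by
`W i` until time `n i` and then by a cover element for the remaining length `L - n i`. -/
lemma exists_covers_of_variable_cover {X ι : Type*} [MetricSpace X] {T : X → X} {ε : ℝ}
    {b : ℕ} (hb : 1 ≤ b) (t : Finset ι) (n : ι → ℕ) (hn : ∀ i ∈ t, 1 ≤ n i) (W : ι → Set X)
    (hcov : ∀ x, ∃ i ∈ t, x ∈ W i)
    (hW : ∀ i ∈ t, ∀ x ∈ W i, ∀ y ∈ W i, ∀ k < n i, dist (T^[k] x) (T^[k] y) < ε)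
    (hsum : ∑ i ∈ t, ((b : ℝ) ^ n i)⁻¹ ≤ 1) :
    ∃ C : ℕ, ∀ L : ℕ, ∃ 𝒱 : Finset (Set X),
    (∀ x, ∃ V ∈ 𝒱, x ∈ V) ∧
    (∀ V ∈ 𝒱, ∀ x ∈ V, ∀ y ∈ V, ∀ k < L, dist (T^[k] x) (T^[k] y) < ε) ∧
    𝒱.card ≤ C * b ^ L := by
  classical
  have hbR : (1 : ℝ) ≤ b := by exact_mod_cast hb
  refine ⟨b ^ t.sup n, fun L => ?_⟩
  induction L using Nat.strong_induction_on with
  | _ L ih =>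
    have ih' : ∀ i : ι, ∃ 𝒱 : Finset (Set X), 1 ≤ n i → n i < L →
        (∀ x, ∃ V ∈ 𝒱, x ∈ V) ∧
        (∀ V ∈ 𝒱, ∀ x ∈ V, ∀ y ∈ V, ∀ k < L - n i, dist (T^[k] x) (T^[k] y) < ε) ∧
        𝒱.card ≤ b ^ t.sup n * b ^ (L - n i) := by
      intro i
      by_cases h : 1 ≤ n i ∧ n i < L
      · obtain ⟨𝒱, h𝒱⟩ := ih (L - n i) (by omega)
        exact ⟨𝒱, fun _ _ => h𝒱⟩
      · exact ⟨∅, fun h1 h2 => absurd ⟨h1, h2⟩ h⟩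
    choose 𝒱 h𝒱 using ih'
    refine ⟨t.biUnion fun i => if L ≤ n i then {W i} else
      (𝒱 i).image fun V => W i ∩ T^[n i] ⁻¹' V, ?_, ?_, ?_⟩
    · intro x
      obtain ⟨i, hi, hx⟩ := hcov x
      by_cases hL : L ≤ n i
      · exact ⟨W i, Finset.mem_biUnion.2 ⟨i, hi, by simp [hL]⟩, hx⟩
      · obtain ⟨V, hV, hxV⟩ := (h𝒱 i (hn i hi) (by omega)).1 (T^[n i] x)
        refine ⟨W i ∩ T^[n i] ⁻¹' V, Finset.mem_biUnion.2 ⟨i, hi, ?_⟩, hx, hxV⟩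
        rw [if_neg hL]
        exact Finset.mem_image_of_mem _ hV
    · intro V hV x hx y hy k hk
      obtain ⟨i, hi, hV⟩ := Finset.mem_biUnion.1 hV
      by_cases hL : L ≤ n i
      · rw [if_pos hL, Finset.mem_singleton] at hV
        subst hV
        exact hW i hi x hx y hy k (by omega)
      · rw [if_neg hL, Finset.mem_image] at hV
        obtain ⟨V', hV', rfl⟩ := hV
        by_cases hk' : k < n i
        · exact hW i hi x hx.1 y hy.1 k hk'
        · have := (h𝒱 i (hn i hi) (by omega)).2.1 V' hV' _ hx.2 _ hy.2 (k - n i) (by omega)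
          rw [← Function.iterate_add_apply, ← Function.iterate_add_apply,
            Nat.sub_add_cancel (by omega)] at this
          exact this
    · have hcard : ∀ i ∈ t, (((if L ≤ n i then {W i} else
          (𝒱 i).image fun V => W i ∩ T^[n i] ⁻¹' V : Finset (Set X)).card : ℕ) : ℝ) ≤
          ((b : ℝ) ^ t.sup n * b ^ L) * ((b : ℝ) ^ n i)⁻¹ := by
        intro i hi
        have hpos : (0 : ℝ) < (b : ℝ) ^ n i := by positivity
        rw [← div_eq_mul_inv, le_div_iff₀ hpos]
        split_ifs with hL
        · have h1 : (b : ℝ) ^ n i ≤ b ^ t.sup n :=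
            pow_le_pow_right₀ hbR (Finset.le_sup hi)
          have h2 : (1 : ℝ) ≤ (b : ℝ) ^ L := one_le_pow₀ hbR
          rw [Finset.card_singleton, Nat.cast_one, one_mul]
          exact h1.trans (le_mul_of_one_le_right (by positivity) h2)
        · have h1 := (h𝒱 i (hn i hi) (by omega)).2.2
          have h2 : (((𝒱 i).image fun V => W i ∩ T^[n i] ⁻¹' V).card : ℝ) ≤
              (b : ℝ) ^ t.sup n * b ^ (L - n i) := by
            exact_mod_cast Finset.card_image_le.trans h1
          calc _ ≤ ((b : ℝ) ^ t.sup n * b ^ (L - n i)) * b ^ n i := by gcongr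
            _ = _ := by rw [mul_assoc, ← pow_add, Nat.sub_add_cancel (by omega)]
      have : ((t.biUnion fun i => if L ≤ n i then {W i} else
          (𝒱 i).image fun V => W i ∩ T^[n i] ⁻¹' V).card : ℝ) ≤ (b : ℝ) ^ t.sup n * b ^ L := by
        calc _ ≤ ((∑ i ∈ t, (if L ≤ n i then {W i} else
              (𝒱 i).image fun V => W i ∩ T^[n i] ⁻¹' V : Finset (Set X)).card : ℕ) : ℝ) := by
              exact_mod_cast Finset.card_biUnion_le
          _ ≤ ∑ i ∈ t, ((b : ℝ) ^ t.sup n * b ^ L) * ((b : ℝ) ^ n i)⁻¹ := by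
              push_cast
              exact Finset.sum_le_sum hcard
          _ = ((b : ℝ) ^ t.sup n * b ^ L) * ∑ i ∈ t, ((b : ℝ) ^ n i)⁻¹ := by
              rw [Finset.mul_sum]
          _ ≤ _ := mul_le_of_le_one_right (by positivity) hsum
      exact_mod_cast this

lemma exists_hasExpCovers {X : Type*} [MetricSpace X] [CompactSpace X] {T : X → X}
    (hT : Continuous T) (hfin : bowenEntropy T Set.univ ≠ ∞) : ∃ b : ℕ, HasExpCovers T b := by
  -- a real `s` above the critical value
  obtain ⟨s, hs⟩ : ∃ s : ℝ, Mtop T s Set.univ ≠ ∞ := by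
    refine ⟨(bowenEntropy T Set.univ).toReal + 1, fun h => ?_⟩
    have h1 : ENNReal.ofReal ((bowenEntropy T Set.univ).toReal + 1) ≤ bowenEntropy T Set.univ :=
      le_iSup₂_of_le (f := fun (s : ℝ) (_ : Mtop T s Set.univ = ∞) => ENNReal.ofReal s) _ h le_rfl
    have h2 := (ENNReal.ofReal_le_iff_le_toReal hfin).1 h1
    linarith
  obtain ⟨b, hb⟩ := exists_nat_ge (Real.exp (s + 1))
  have hb1 : 1 ≤ b := by
    have : (0 : ℝ) < b := (Real.exp_pos _).trans_le hb
    exact_mod_cast this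
  refine ⟨b, fun ε hε => ?_⟩
  set K : ℝ≥0∞ := Mtop T s Set.univ + 1 with hK
  have hKtop : K ≠ ∞ := by simp [hK, hs]
  obtain ⟨N, hN⟩ := exists_nat_ge (max K.toReal 1)
  have hMpre : Mpre T s N (ε / 2) Set.univ < K := by
    refine lt_of_le_of_lt ?_ (ENNReal.lt_add_right hs one_ne_zero)
    exact (le_iSup (fun N => Mpre T s N (ε / 2) Set.univ) N).trans
      (le_iSup₂_of_le (f := fun (ε : ℝ) (_ : 0 < ε) => MpreEps T s ε Set.univ)
        (ε / 2) (by positivity) le_rfl)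
  simp only [Mpre, iInf_lt_iff] at hMpre
  obtain ⟨I, x, n, hn, hcov, hlt⟩ := hMpre
  obtain ⟨t, ht⟩ := isCompact_univ.elim_finite_subcover
    (fun i : I => bowenBall T (x i) (n i) (ε / 2)) (fun i => bowenBall_isOpen hT _ _ _)
    (by simpa [Set.iUnion_coe_set] using hcov)
  have hN1 : 1 ≤ N := by
    have := (le_max_right K.toReal 1).trans hN
    exact_mod_cast this
  refine exists_covers_of_variable_cover hb1 t (fun i => n i)
    (fun i _ => hN1.trans (hn i i.2)) (fun i => bowenBall T (x i) (n i) (ε / 2)) ?_ ?_ ?_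
  · intro y
    have := ht (mem_univ y)
    simpa using this
  · intro i _ y hy z hz k hk
    have h1 := hy k hk
    have h2 := hz k hk
    have h3 := dist_triangle_left (T^[k] y) (T^[k] z) (T^[k] (x i))
    linarith
  · have h1 : ∑ i ∈ t, Real.exp (-s * n i) ≤ K.toReal := by
      rw [← ENNReal.ofReal_le_iff_le_toReal hKtop,
        ENNReal.ofReal_sum_of_nonneg fun i _ => (Real.exp_pos _).le]
      exact (ENNReal.sum_le_tsum t).trans hlt.le
    have h2 : ∀ i ∈ t, ((b : ℝ) ^ n i)⁻¹ ≤ Real.exp (-s * n i) * Real.exp (-N) := by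
      intro i _
      have h3 : Real.exp ((s + 1) * n i) ≤ (b : ℝ) ^ n i := by
        rw [mul_comm, Real.exp_nat_mul]
        gcongr
      have h4 : (N : ℝ) ≤ n i := by exact_mod_cast hn i i.2
      calc ((b : ℝ) ^ n i)⁻¹ ≤ (Real.exp ((s + 1) * n i))⁻¹ := by gcongr
        _ = Real.exp (-((s + 1) * n i)) := (Real.exp_neg _).symm
        _ ≤ Real.exp (-s * n i + -N) := by
            apply Real.exp_le_exp.2
            nlinarith
        _ = _ := Real.exp_add _ _
    have h5 : K.toReal ≤ Real.exp N := by
      have := Real.add_one_le_exp (N : ℝ)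
      have := (le_max_left K.toReal 1).trans hN
      linarith
    calc _ ≤ ∑ i ∈ t, Real.exp (-s * n i) * Real.exp (-N) := Finset.sum_le_sum h2
      _ = (∑ i ∈ t, Real.exp (-s * n i)) * Real.exp (-N) := by rw [Finset.sum_mul]
      _ ≤ Real.exp N * Real.exp (-N) := by
          gcongr
          exact h1.trans h5
      _ = 1 := by rw [← Real.exp_add]; simp

/-! ### Choosing thresholds that are rarely hit -/

/-- First moment argument. Every situation `σ` and position `j` forbid at most one of the
`M = B ^ D` choices. With the weight `M ^ hits` on a choice function `c`, the average over `c`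
of the total weight is less than `B ^ N`, so some `c` is hit at most `N / D` times in each situation. -/
lemma exists_choice_few_hits {ι : Type*} [Fintype ι] (N B D M : ℕ) (hB : 1 ≤ B)
    (hM : M = B ^ D) (A : ι → Fin N → Fin M → Prop)
    (hA : ∀ σ j m m', A σ j m → A σ j m' → m = m')
    (hcard : Fintype.card ι * 2 ^ N < B ^ N) :
    ∃ c : Fin N → Fin M, ∀ σ (S : Finset (Fin N)), (∀ j ∈ S, A σ j (c j)) →
      D * S.card ≤ N := by
  classical
  have hM1 : 1 ≤ M := hM ▸ Nat.one_le_pow _ _ hB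
  let wt : ι → (Fin N → Fin M) → ℕ := fun σ c => ∏ j, if A σ j (c j) then M else 1
  have hrow : ∀ σ j, ∑ m : Fin M, (if A σ j m then M else 1) ≤ 2 * M := by
    intro σ j
    have h1 : ∀ m : Fin M, (if A σ j m then M else 1) ≤ (if A σ j m then M else 0) + 1 := by
      intro m; split_ifs <;> omega
    have h2 : (Finset.univ.filter fun m => A σ j m).card ≤ 1 :=
      Finset.card_le_one.2 fun a ha a' ha' =>
        hA σ j a a' (Finset.mem_filter.1 ha).2 (Finset.mem_filter.1 ha').2
    calc _ ≤ ∑ m : Fin M, ((if A σ j m then M else 0) + 1) := Finset.sum_le_sum fun m _ => h1 m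
      _ = (Finset.univ.filter fun m => A σ j m).card * M + M := by
          rw [Finset.sum_add_distrib, ← Finset.sum_filter]; simp
      _ ≤ 2 * M := by nlinarith
  have hσ : ∀ σ, ∑ c, wt σ c ≤ (2 * M) ^ N := by
    intro σ
    have := Finset.prod_univ_sum (fun _ : Fin N => (Finset.univ : Finset (Fin M)))
      (fun j m => if A σ j m then M else 1)
    simp only [Fintype.piFinset_univ] at this
    change ∑ c : Fin N → Fin M, ∏ j, (if A σ j (c j) then M else 1) ≤ _
    rw [← this]
    exact (Finset.prod_le_prod' fun j _ => hrow σ j).trans (by simp)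
  have htot : ∑ c : Fin N → Fin M, ∑ σ, wt σ c < ∑ c : Fin N → Fin M, B ^ N := by
    rw [Finset.sum_comm]
    calc _ ≤ ∑ _σ : ι, (2 * M) ^ N := Finset.sum_le_sum fun σ _ => hσ σ
      _ = (Fintype.card ι * 2 ^ N) * M ^ N := by simp [mul_pow, mul_assoc]
      _ < B ^ N * M ^ N := Nat.mul_lt_mul_of_pos_right hcard (by positivity)
      _ = _ := by simp [mul_comm]
  obtain ⟨c, -, hc⟩ := Finset.exists_lt_of_sum_lt htot
  refine ⟨c, fun σ S hS => ?_⟩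
  have h1 : M ^ S.card ≤ wt σ c := by
    calc M ^ S.card = ∏ j ∈ S, (if A σ j (c j) then M else 1) := by
          rw [Finset.prod_congr rfl fun j hj => if_pos (hS j hj), Finset.prod_const]
      _ ≤ wt σ c := Finset.prod_le_univ_prod_of_one_le' fun j => by split_ifs <;> omega
  have h2 : wt σ c < B ^ N :=
    (Finset.single_le_sum (f := fun σ => wt σ c) (fun _ _ => Nat.zero_le _)
      (Finset.mem_univ σ)).trans_lt hc
  by_contra hlt
  have h3 : B ^ N ≤ M ^ S.card := by
    rw [hM, ← pow_mul]
    exact Nat.pow_le_pow_right hB (by omega)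
  omega

/-- The product of all finite cyclic groups, the driving zero-entropy system. -/
abbrev CyclicProd : Type := (n : ℕ) → Fin (n + 1)

/-- Translation by `1` in every coordinate. -/
def cycShift (g : CyclicProd) : CyclicProd := fun n => g n + 1

lemma continuous_cycShift : Continuous cycShift :=
  continuous_pi fun n => (continuous_of_discreteTopology (f := fun a : Fin (n + 1) => a + 1)).comp
    (continuous_apply n)

lemma cycShift_iterate (j : ℕ) (g : CyclicProd) (n : ℕ) :
    cycShift^[j] g n = g n + Fin.ofNat (n + 1) j := by
  induction j with
  | zero => ext; simp
  | succ j ih =>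
    rw [Function.iterate_succ_apply', cycShift, ih, add_assoc]
    congr 1
    ext
    simp [Fin.val_add]

/-- `α` takes only finitely many patterns along the orbits of `cycShift`. -/
def OrbitFinite (α : CyclicProd → ℝ) : Prop :=
  (Set.range fun (g : CyclicProd) (j : ℕ) => α (cycShift^[j] g)).Finite

open Classical in
/-- A bound for the number of visits in all windows of length `N` gives the asymptotic
frequency bound in all windows. -/
lemma count_le_of_window {X : Type*} {T : X → X} (P : X → CyclicProd → Prop) (N D : ℕ)
    (hN : 1 ≤ N)
    (h : ∀ x g, D * Nat.count (fun j => P (T^[j] x) (cycShift^[j] g)) N ≤ N) (n : ℕ) :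
    ∀ x g, D * Nat.count (fun j => P (T^[j] x) (cycShift^[j] g)) n ≤ n + D * N := by
  induction n using Nat.strong_induction_on with
  | _ n ih =>
    intro x g
    by_cases hn : n < N
    · have : Nat.count (fun j => P (T^[j] x) (cycShift^[j] g)) n ≤ N := (Nat.count_le _).trans hn.le
      nlinarith
    · obtain ⟨n', rfl⟩ := Nat.exists_eq_add_of_le (not_lt.1 hn)
      have h1 := ih n' (by omega) (T^[N] x) (cycShift^[N] g)
      simp only [← Function.iterate_add_apply] at h1
      have h2 := h x g
      rw [Nat.count_add, mul_add]
      simp only [add_comm _ N] at h1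
      omega

lemma exists_mul_lt_two_pow (A : ℕ) : ∃ N : ℕ, A * (N + 1) < 2 ^ (N + 1) := by
  refine ⟨4 * A + 1, ?_⟩
  have h1 : 2 * A + 1 < 2 ^ (2 * A + 1) := Nat.lt_two_pow_self
  have h2 : 2 ^ (4 * A + 1 + 1) = 2 ^ (2 * A + 1) * 2 ^ (2 * A + 1) := by
    rw [← pow_add]; congr 1; ring
  rw [h2]
  nlinarith

/-- The point `x` is seen by `f` in the moving interval `[α g, α g + w]`. -/
def InMovingInterval {X : Type*} (f : X → ℝ) (α : CyclicProd → ℝ) (w : ℝ) (x : X)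
    (g : CyclicProd) : Prop :=
  α g ≤ f x ∧ f x ≤ α g + w

open Classical in
/-- Refinement step: the moving interval `[α, α + w]` can be shrunk to a moving interval
`[α', α' + w']` which `f` visits with frequency at most `1 / D` along every orbit. -/
lemma exists_refined_interval {X : Type*} [MetricSpace X] [CompactSpace X] {T : X → X}
    {b : ℕ} (hcov : HasExpCovers T b) {f : X → ℝ} (hf : Continuous f)
    (D : ℕ) (α : CyclicProd → ℝ) (w : ℝ) (hα : Continuous α) (hαf : OrbitFinite α) (hw : 0 < w) :
    ∃ (α' : CyclicProd → ℝ) (w' : ℝ), Continuous α' ∧ OrbitFinite α' ∧ 0 < w' ∧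
      (∀ g, α g ≤ α' g) ∧ (∀ g, α' g + w' ≤ α g + w) ∧
      ∃ C : ℕ, ∀ n x g, D * Nat.count (fun j => InMovingInterval f α' w' (T^[j] x) (cycShift^[j] g)) n
        ≤ n + C := by
  set B : ℕ := 4 * (b + 1) with hB
  set M : ℕ := B ^ D with hM
  have hM1 : 1 ≤ M := Nat.one_le_pow _ _ (by omega)
  have hMR : (1 : ℝ) ≤ M := by exact_mod_cast hM1
  set w' : ℝ := w / (2 * M) with hw'
  have hw'pos : 0 < w' := by positivity
  have hww' : w = 2 * M * w' := by rw [hw']; field_simp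
  obtain ⟨ε, hε, hfε⟩ := Metric.uniformContinuous_iff.1
    (CompactSpace.uniformContinuous_of_continuous hf) w' hw'pos
  obtain ⟨C, hC⟩ := hcov ε hε
  have hRfin : (Set.range fun (g : CyclicProd) (j : ℕ) => α (cycShift^[j] g)).Finite := hαf
  set R := hRfin.toFinset with hR
  obtain ⟨N', hN'⟩ := exists_mul_lt_two_pow (C * R.card)
  set N := N' + 1 with hN
  obtain ⟨𝒱, h𝒱cov, h𝒱dist, h𝒱card⟩ := hC N
  -- a situation: a cover element, an orbit pattern of `α`, and the phase in `Fin N`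
  let A : (𝒱 × R × Fin N) → Fin N → Fin M → Prop := fun σ p m =>
    ∃ x ∈ (σ.1 : Set X),
      (σ.2.1 : ℕ → ℝ) (p - σ.2.2).val + 2 * m.val * w' ≤ f (T^[(p - σ.2.2).val] x) ∧
      f (T^[(p - σ.2.2).val] x) ≤ (σ.2.1 : ℕ → ℝ) (p - σ.2.2).val + 2 * m.val * w' + w'
  have hAlt : ∀ σ p m m', A σ p m → A σ p m' → ¬ m < m' := by
    rintro σ p m m' ⟨x, hx, hx1, hx2⟩ ⟨y, hy, hy1, hy2⟩ hlt
    have h1 := hfε (h𝒱dist _ σ.1.2 x hx y hy (p - σ.2.2).val (p - σ.2.2).isLt)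
    rw [Real.dist_eq, abs_lt] at h1
    have h2 : (m.val : ℝ) + 1 ≤ m'.val := by exact_mod_cast hlt
    nlinarith
  obtain ⟨c, hc⟩ := exists_choice_few_hits N B D M (by omega) hM A
    (fun σ p m m' h h' => le_antisymm (not_lt.1 (hAlt σ p m' m h' h))
      (not_lt.1 (hAlt σ p m m' h h')))
    (by
      simp only [Fintype.card_prod, Fintype.card_coe, Fintype.card_fin]
      calc 𝒱.card * (R.card * N) * 2 ^ N ≤ (C * b ^ N) * (R.card * N) * 2 ^ N := by gcongr
        _ = (C * R.card * N) * (b ^ N * 2 ^ N) := by ring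
        _ ≤ (C * R.card * N) * ((b + 1) ^ N * 2 ^ N) := by gcongr; omega
        _ < 2 ^ N * ((b + 1) ^ N * 2 ^ N) := Nat.mul_lt_mul_of_pos_right hN' (by positivity)
        _ = B ^ N := by rw [hB, mul_pow, show 4 = 2 * 2 from rfl, mul_pow]; ring)
  refine ⟨fun g => α g + 2 * (c (g N')).val * w', w', ?_, ?_, hw'pos, ?_, ?_, D * N, ?_⟩
  · refine hα.add ?_
    exact (continuous_of_discreteTopology (f := fun p : Fin N => 2 * ((c p).val : ℝ) * w')).comp
      (continuous_apply N')
  · refine ((hRfin.prod (Set.finite_univ (α := Fin N))).image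
      fun q : (ℕ → ℝ) × Fin N => fun j => q.1 j + 2 * (c (q.2 + Fin.ofNat N j)).val * w').subset ?_
    rintro _ ⟨g, rfl⟩
    refine ⟨(fun j => α (cycShift^[j] g), g N'), ⟨⟨g, rfl⟩, mem_univ _⟩, ?_⟩
    funext j
    simp only [cycShift_iterate]
    rfl
  · intro g
    have : 0 ≤ 2 * ((c (g N')).val : ℝ) * w' := by positivity
    linarith
  · intro g
    have h1 : ((c (g N')).val : ℝ) + 1 ≤ M := by exact_mod_cast (c (g N')).isLt
    dsimp only
    rw [hww']
    nlinarith
  · intro n x g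
    refine count_le_of_window (InMovingInterval f _ w') N D (by omega) ?_ n x g
    intro x g
    obtain ⟨V, hV, hxV⟩ := h𝒱cov x
    let σ : 𝒱 × R × Fin N := (⟨V, hV⟩, ⟨fun j => α (cycShift^[j] g), by
      rw [hR, Set.Finite.mem_toFinset]; exact ⟨g, rfl⟩⟩, g N')
    have hsub : ∀ j < N, (g N' + Fin.ofNat N j - g N').val = j := by
      intro j hj
      rw [add_sub_cancel_left]
      simp [Fin.ofNat, Nat.mod_eq_of_lt hj]
    rw [Nat.count_eq_card_filter_range]
    rw [← Finset.card_image_of_injOn (f := fun j => g N' + Fin.ofNat N j)]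
    · refine hc σ _ ?_
      intro p hp
      obtain ⟨j, hj, rfl⟩ := Finset.mem_image.1 hp
      obtain ⟨hjN, hj1, hj2⟩ := Finset.mem_filter.1 hj
      rw [Finset.mem_range] at hjN
      refine ⟨x, hxV, ?_⟩
      change (fun j => α (cycShift^[j] g)) (g N' + Fin.ofNat N j - g N').val + _ ≤
        f (T^[(g N' + Fin.ofNat N j - g N').val] x) ∧
        f (T^[(g N' + Fin.ofNat N j - g N').val] x) ≤
        (fun j => α (cycShift^[j] g)) (g N' + Fin.ofNat N j - g N').val + _ + _
      rw [hsub j hjN]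
      dsimp only at hj1 hj2
      rw [cycShift_iterate] at hj1 hj2
      exact ⟨hj1, hj2⟩
    · intro j hj j' hj' h
      have h1 := hsub j (Finset.mem_range.1 (Finset.mem_filter.1 hj).1)
      have h2 := hsub j' (Finset.mem_range.1 (Finset.mem_filter.1 hj').1)
      dsimp only at h
      rw [← h1, h, h2]

open Classical in
/-- A threshold for `f` moving with `g : CyclicProd`, given as the common point of the nested
intervals `[left k g, left k g + width k]`. The `k`-th interval is seen by `f` with
frequency at most `1 / k` along every orbit. -/
structure MovingThreshold {X : Type*} (T : X → X) (f : X → ℝ) (a l : ℝ) where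
  left : ℕ → CyclicProd → ℝ
  width : ℕ → ℝ
  continuous_left : ∀ k, Continuous (left k)
  orbitFinite : ∀ k, OrbitFinite (left k)
  width_pos : ∀ k, 0 < width k
  left_zero : ∀ g, left 0 g = a
  width_zero : width 0 = l
  left_le : ∀ k g, left k g ≤ left (k + 1) g
  right_le : ∀ k g, left (k + 1) g + width (k + 1) ≤ left k g + width k
  rare : ∀ k, ∃ C : ℕ, ∀ n x g,
    k * Nat.count (fun j => InMovingInterval f (left k) (width k) (T^[j] x) (cycShift^[j] g)) n
      ≤ n + C

lemma exists_movingThreshold {X : Type*} [MetricSpace X] [CompactSpace X] {T : X → X}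
    {b : ℕ} (hcov : HasExpCovers T b) {f : X → ℝ} (hf : Continuous f) (a l : ℝ) (hl : 0 < l) :
    Nonempty (MovingThreshold T f a l) := by
  classical
  let S := {p : (CyclicProd → ℝ) × ℝ // Continuous p.1 ∧ OrbitFinite p.1 ∧ 0 < p.2}
  have hstep : ∀ (k : ℕ) (p : S), ∃ q : S, (∀ g, p.1.1 g ≤ q.1.1 g) ∧
      (∀ g, q.1.1 g + q.1.2 ≤ p.1.1 g + p.1.2) ∧ ∃ C : ℕ, ∀ n x g,
      (k + 1) * Nat.count (fun j => InMovingInterval f q.1.1 q.1.2 (T^[j] x) (cycShift^[j] g)) n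
        ≤ n + C := by
    intro k p
    obtain ⟨α', w', h1, h2, h3, h4, h5, h6⟩ :=
      exists_refined_interval hcov hf (k + 1) p.1.1 p.1.2 p.2.1 p.2.2.1 p.2.2.2
    exact ⟨⟨(α', w'), h1, h2, h3⟩, h4, h5, h6⟩
  choose next hnext using hstep
  let p0 : S := ⟨(fun _ => a, l), continuous_const,
    (Set.finite_singleton (fun _ : ℕ => a)).subset (by rintro _ ⟨g, rfl⟩; rfl), hl⟩
  let p : ℕ → S := fun k => Nat.rec p0 next k
  exact ⟨{
    left := fun k => (p k).1.1
    width := fun k => (p k).1.2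
    continuous_left := fun k => (p k).2.1
    orbitFinite := fun k => (p k).2.2.1
    width_pos := fun k => (p k).2.2.2
    left_zero := fun _ => rfl
    width_zero := rfl
    left_le := fun k => (hnext k (p k)).1
    right_le := fun k => (hnext k (p k)).2.1
    rare := fun k => by
      cases k with
      | zero => exact ⟨0, fun n x g => by simp⟩
      | succ k => exact (hnext k (p k)).2.2 }⟩

namespace MovingThreshold

variable {X : Type*} {T : X → X} {f : X → ℝ} {a l : ℝ}

lemma left_le_right (θ : MovingThreshold T f a l) (j k : ℕ) (g : CyclicProd) :
    θ.left j g ≤ θ.left k g + θ.width k := by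
  have h1 : Monotone fun k => θ.left k g := monotone_nat_of_le_succ fun k => θ.left_le k g
  have h2 : Antitone fun k => θ.left k g + θ.width k :=
    antitone_nat_of_succ_le fun k => θ.right_le k g
  have h3 := h1 (le_max_left j k)
  have h4 := h2 (le_max_right j k)
  have h5 := θ.width_pos (max j k)
  dsimp only at h3 h4
  linarith

/-- The binary sequence `ω` records on which side of the moving threshold the orbit of `x` lies:
`false` for the lower closed side, `true` for the upper one (both allowed on the threshold). -/
def Admissible (θ : MovingThreshold T f a l) (x : X) (g : CyclicProd) (ω : ℕ → Bool) : Prop :=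
  ∀ n k, (ω n = false → f (T^[n] x) ≤ θ.left k (cycShift^[n] g) + θ.width k) ∧
    (ω n = true → θ.left k (cycShift^[n] g) ≤ f (T^[n] x))

lemma exists_admissible (θ : MovingThreshold T f a l) (x : X) (g : CyclicProd) :
    ∃ ω, θ.Admissible x g ω := by
  classical
  refine ⟨fun n => decide (∃ k, θ.left k (cycShift^[n] g) + θ.width k < f (T^[n] x)),
    fun n k => ⟨fun h => ?_, fun h => ?_⟩⟩
  · rw [decide_eq_false_iff_not] at h
    push Not at h
    exact h k
  · rw [decide_eq_true_iff] at h
    obtain ⟨j, hj⟩ := h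
    exact (θ.left_le_right k j _).trans hj.le

lemma Admissible.shift {θ : MovingThreshold T f a l} {x : X} {g : CyclicProd} {ω : ℕ → Bool}
    (h : θ.Admissible x g ω) : θ.Admissible (T x) (cycShift g) fun n => ω (n + 1) :=
  fun n k => h (n + 1) k

/-- The words of length `n` occurring in admissible sequences over `x`, for any `g`. -/
def patterns (θ : MovingThreshold T f a l) (x : X) (n : ℕ) : Set (Fin n → Bool) :=
  {u | ∃ g ω, θ.Admissible x g ω ∧ u = fun j : Fin n => ω j}

/-- Over a fixed `x` the number of words grows with exponential rate `0`: given one of the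
finitely many orbit patterns of the `D`-th interval, a word is determined outside the
(at most about `n / D`) times at which `f` sees that interval. -/
lemma patterns_card_pow_le (θ : MovingThreshold T f a l) (x : X) (D : ℕ) (hD : 1 ≤ D) :
    ∃ K : ℕ, ∀ n, (θ.patterns x n).ncard ^ D ≤ K * 2 ^ n := by
  classical
  obtain ⟨C, hC⟩ := θ.rare D
  have hRfin : (Set.range fun (g : CyclicProd) (j : ℕ) => θ.left D (cycShift^[j] g)).Finite :=
    θ.orbitFinite D
  set R := hRfin.toFinset with hR
  refine ⟨R.card ^ D * 2 ^ C, fun n => ?_⟩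
  let hit : (ℕ → ℝ) → Fin n → Prop := fun r j =>
    r j ≤ f (T^[j] x) ∧ f (T^[j] x) ≤ r j + θ.width D
  let v : (ℕ → ℝ) → Fin n → Bool := fun r j => decide (r j + θ.width D < f (T^[j] x))
  let F : (ℕ → ℝ) → Finset (Fin n → Bool) := fun r =>
    Finset.univ.filter fun u => ∀ j, ¬ hit r j → u j = v r j
  have hsub : θ.patterns x n ⊆ (R.biUnion F : Finset (Fin n → Bool)) := by
    rintro u ⟨g, ω, hω, rfl⟩
    rw [Finset.mem_coe, Finset.mem_biUnion]
    refine ⟨fun j => θ.left D (cycShift^[j] g), ?_, ?_⟩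
    · rw [hR, Set.Finite.mem_toFinset]; exact ⟨g, rfl⟩
    · refine Finset.mem_filter.2 ⟨Finset.mem_univ _, fun j hj => ?_⟩
      have h := hω j D
      by_cases hb : ω j = true
      · have h1 := h.2 hb
        have h2 : θ.left D (cycShift^[j] g) + θ.width D < f (T^[j] x) := by
          by_contra h3
          exact hj ⟨h1, not_lt.1 h3⟩
        simp [v, hb, h2]
      · rw [Bool.not_eq_true] at hb
        have h1 := h.1 hb
        simp [v, hb, h1]
  have hF : ∀ r ∈ R, (F r).card ≤ 2 ^ ((n + C) / D) := by
    intro r hr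
    rw [hR, Set.Finite.mem_toFinset] at hr
    obtain ⟨g, rfl⟩ := hr
    set r : ℕ → ℝ := fun j => θ.left D (cycShift^[j] g) with hrdef
    have h1 : (F r).card ≤ Fintype.card ({j // hit r j} → Bool) := by
      rw [← Finset.card_univ]
      refine Finset.card_le_card_of_injOn (fun u j => u j.1) (fun _ _ => Finset.mem_univ _) ?_
      intro u hu u' hu' huu'
      funext j
      by_cases hj : hit r j
      · exact congrFun huu' ⟨j, hj⟩
      · rw [(Finset.mem_filter.1 hu).2 j hj, (Finset.mem_filter.1 hu').2 j hj]
    have h2 : Fintype.card {j // hit r j} ≤ Nat.count (fun j =>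
        InMovingInterval f (θ.left D) (θ.width D) (T^[j] x) (cycShift^[j] g)) n := by
      rw [Fintype.card_subtype, Nat.count_eq_card_filter_range]
      refine Finset.card_le_card_of_injOn (fun j => j.val) ?_ (fun _ _ _ _ h => Fin.ext h)
      intro j hj
      have := (Finset.mem_filter.1 hj).2
      exact Finset.mem_coe.2 (Finset.mem_filter.2 ⟨Finset.mem_range.2 j.isLt, this⟩)
    refine h1.trans ?_
    rw [Fintype.card_fun, Fintype.card_bool]
    refine Nat.pow_le_pow_right (by norm_num) ?_
    rw [Nat.le_div_iff_mul_le (by omega), mul_comm]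
    exact (Nat.mul_le_mul_left D h2).trans (hC n x g)
  have hcard : (θ.patterns x n).ncard ≤ R.card * 2 ^ ((n + C) / D) := by
    calc _ ≤ (R.biUnion F).card := by
          rw [← Set.ncard_coe_finset]
          exact Set.ncard_le_ncard hsub (Finset.finite_toSet _)
      _ ≤ _ := Finset.card_biUnion_le_card_mul _ _ _ hF
  calc _ ≤ (R.card * 2 ^ ((n + C) / D)) ^ D := Nat.pow_le_pow_left hcard D
    _ = R.card ^ D * 2 ^ ((n + C) / D * D) := by rw [mul_pow, ← pow_mul]
    _ ≤ R.card ^ D * 2 ^ (n + C) := by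
        gcongr
        · norm_num
        · exact Nat.div_mul_le_self _ _
    _ = _ := by ring

end MovingThreshold

/-! ### Compactness and capacity entropy -/

/-- In a compact metric space, a decreasing sequence of closed relations whose intersection is
contained in the diagonal is eventually contained in any uniform neighbourhood of it. -/
lemma exists_relation_small {Y : Type*} [MetricSpace Y] [CompactSpace Y] (E : ℕ → Set (Y × Y))
    (hcl : ∀ m, IsClosed (E m)) (hanti : ∀ m, E (m + 1) ⊆ E m)
    (hdiag : ∀ y y', (∀ m, (y, y') ∈ E m) → y = y') (ε : ℝ) (hε : 0 < ε) :
    ∃ m, ∀ y y', (y, y') ∈ E m → dist y y' < ε := by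
  by_contra hcon
  push Not at hcon
  have hK : IsClosed {q : Y × Y | ε ≤ dist q.1 q.2} :=
    isClosed_le continuous_const (continuous_fst.dist continuous_snd)
  obtain ⟨⟨y, y'⟩, hy⟩ := IsCompact.nonempty_iInter_of_sequence_nonempty_isCompact_isClosed
    (fun m => E m ∩ {q : Y × Y | ε ≤ dist q.1 q.2})
    (fun m => Set.inter_subset_inter_left _ (hanti m))
    (fun m => by
      obtain ⟨y, y', h, h'⟩ := hcon m
      exact ⟨(y, y'), h, h'⟩)
    ((hcl 0).inter hK).isCompact (fun m => (hcl m).inter hK)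
  rw [Set.mem_iInter] at hy
  have := hdiag y y' fun m => (hy m).1
  have h2 : ε ≤ dist y y' := (hy 0).2
  rw [this, dist_self] at h2
  linarith

lemma upcapEntropy_eq_zero {Y : Type*} [MetricSpace Y] {Γ : Y → Y} {Z : Set Y}
    (h : ∀ ε : ℝ, 0 < ε → ∃ m : ℕ, ∀ D : ℕ, 1 ≤ D → ∃ K : ℕ, ∀ (n : ℕ) (E : Finset Y),
      (↑E ⊆ Z ∧ ∀ x ∈ E, ∀ y ∈ E, x ≠ y → ∃ k < n, ε < dist (Γ^[k] x) (Γ^[k] y)) →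
      E.card ^ D ≤ K * 2 ^ (m * n)) :
    upcapEntropy Γ Z = 0 := by
  rw [upcapEntropy]
  simp only [ENNReal.iSup_eq_zero]
  intro ε hε
  obtain ⟨m, hm⟩ := h ε hε
  have key : ∀ D : ℕ, 1 ≤ D →
      Filter.limsup (fun n : ℕ => elog (maxSep Γ Z n ε) / n) Filter.atTop ≤
        ENNReal.ofReal ((1 + m) * (D : ℝ)⁻¹) := by
    intro D hD
    obtain ⟨K, hK⟩ := hm D hD
    have hDR : (0 : ℝ) < D := by exact_mod_cast hD
    refine Filter.limsup_le_of_le (by isBoundedDefault) ?_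
    filter_upwards [Filter.eventually_ge_atTop (K + 1)] with n hn
    have hn0 : (0 : ℝ) < n := by exact_mod_cast (by omega : 0 < n)
    -- `log (K 2^{mn}) ≤ n + m n` once `K < n`
    set q : ℝ := (1 + m) * n / D with hq
    have hcard : ∀ E : Finset Y, (↑E ⊆ Z ∧ ∀ x ∈ E, ∀ y ∈ E, x ≠ y →
        ∃ k < n, ε < dist (Γ^[k] x) (Γ^[k] y)) → (E.card : ℝ) ≤ Real.exp q := by
      intro E hE
      have h1 : (E.card : ℝ) ^ D ≤ K * 2 ^ (m * n) := by exact_mod_cast hK n E hE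
      have h2 : (K : ℝ) ≤ Real.exp n := by
        have h3 : (K : ℝ) + 1 ≤ n := by exact_mod_cast hn
        have := Real.add_one_le_exp (n : ℝ)
        linarith
      have h4 : (2 : ℝ) ^ (m * n) ≤ Real.exp (m * n) := by
        have h5 : (2 : ℝ) ≤ Real.exp 1 := by
          have := Real.add_one_le_exp (1 : ℝ)
          linarith
        calc (2 : ℝ) ^ (m * n) ≤ Real.exp 1 ^ (m * n) := by gcongr
          _ = _ := by rw [← Real.exp_nat_mul]; push_cast; ring_nf
      have h6 : (E.card : ℝ) ^ D ≤ Real.exp q ^ D := by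
        calc _ ≤ (K : ℝ) * 2 ^ (m * n) := h1
          _ ≤ Real.exp n * Real.exp (m * n) := by gcongr
          _ = Real.exp q ^ D := by
              rw [← Real.exp_add, ← Real.exp_nat_mul, hq]
              congr 1
              field_simp
      exact le_of_pow_le_pow_left₀ (by omega) (Real.exp_pos _).le h6
    have hsep : maxSep Γ Z n ε ≤ ENNReal.ofReal (Real.exp q) := by
      refine iSup₂_le fun E hE => ?_
      rw [← ENNReal.ofReal_natCast]
      exact ENNReal.ofReal_le_ofReal (hcard E hE)
    have hq0 : 0 ≤ q := by positivity
    have hlog : elog (maxSep Γ Z n ε) ≤ ENNReal.ofReal q := by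
      rw [elog, if_neg (ne_top_of_le_ne_top ENNReal.ofReal_ne_top hsep)]
      apply ENNReal.ofReal_le_ofReal
      have h1 := ENNReal.toReal_le_of_le_ofReal (Real.exp_pos q).le hsep
      rcases (ENNReal.toReal_nonneg (a := maxSep Γ Z n ε)).eq_or_lt with h0 | h0
      · rw [← h0, Real.log_zero]; exact hq0
      · exact (Real.log_le_iff_le_exp h0).2 h1
    calc elog (maxSep Γ Z n ε) / n ≤ ENNReal.ofReal q / ENNReal.ofReal n := by
          rw [ENNReal.ofReal_natCast]
          exact ENNReal.div_le_div_right hlog _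
      _ = ENNReal.ofReal (q / n) := (ENNReal.ofReal_div_of_pos hn0).symm
      _ = _ := by
          congr 1
          rw [hq]
          field_simp
  have hlim : Tendsto (fun D : ℕ => ENNReal.ofReal ((1 + m) * (D : ℝ)⁻¹)) atTop (𝓝 0) := by
    have := (tendsto_inv_atTop_nhds_zero_nat (𝕜 := ℝ)).const_mul (1 + (m : ℝ))
    rw [mul_zero] at this
    simpa using ENNReal.tendsto_ofReal this
  refine le_antisymm (ge_of_tendsto hlim ?_) (zero_le)
  filter_upwards [Filter.eventually_ge_atTop 1] with D hD using key D hD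

/-! ### The extension -/

section Extension

variable {X : Type*} {T : X → X} {f : ℕ → X → ℝ} {a l : ℕ → ℝ}

/-- The extension of `X`: triples of a point, a phase, and for each `i` a sequence admissible
for the `i`-th moving threshold. -/
def extensionSet (θ : ∀ i, MovingThreshold T (f i) (a i) (l i)) :
    Set (X × CyclicProd × (ℕ → ℕ → Bool)) :=
  {h | ∀ i, (θ i).Admissible h.1 h.2.1 (h.2.2 i)}

lemma isClosed_extensionSet [TopologicalSpace X] (hT : Continuous T) (hf : ∀ i, Continuous (f i))
    (θ : ∀ i, MovingThreshold T (f i) (a i) (l i)) : IsClosed (extensionSet θ) := by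
  simp only [extensionSet, MovingThreshold.Admissible, Set.ofPred_forall, Set.ofPred_and]
  have hω : ∀ i n (v : Bool), IsOpen {h : X × CyclicProd × (ℕ → ℕ → Bool) | h.2.2 i n = v} := by
    intro i n v
    have hc : Continuous fun h : X × CyclicProd × (ℕ → ℕ → Bool) => h.2.2 i n := by fun_prop
    exact (isOpen_discrete {v}).preimage hc
  refine isClosed_iInter fun i => isClosed_iInter fun n => isClosed_iInter fun k => ?_
  have h1 : Continuous fun h : X × CyclicProd × (ℕ → ℕ → Bool) => f i (T^[n] h.1) :=
    (hf i).comp ((hT.iterate n).comp continuous_fst)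
  have h2 : Continuous fun h : X × CyclicProd × (ℕ → ℕ → Bool) =>
      (θ i).left k (cycShift^[n] h.2.1) :=
    ((θ i).continuous_left k).comp ((continuous_cycShift.iterate n).comp
      (continuous_fst.comp continuous_snd))
  exact (isClosed_imp (hω i n false) (isClosed_le h1 (h2.add continuous_const))).inter
    (isClosed_imp (hω i n true) (isClosed_le h2 h1))

/-- The dynamics on the extension: `T` on points, translation on phases, shift on sequences. -/
def extensionMap (θ : ∀ i, MovingThreshold T (f i) (a i) (l i)) (h : extensionSet θ) :
    extensionSet θ :=
  ⟨(T h.1.1, cycShift h.1.2.1, fun i n => h.1.2.2 i (n + 1)), fun i => (h.2 i).shift⟩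

lemma continuous_extensionMap [TopologicalSpace X] (hT : Continuous T)
    (θ : ∀ i, MovingThreshold T (f i) (a i) (l i)) : Continuous (extensionMap θ) := by
  refine Continuous.subtype_mk ?_ _
  refine (hT.comp (by fun_prop)).prodMk ((continuous_cycShift.comp (by fun_prop)).prodMk ?_)
  fun_prop

lemma extensionMap_iterate (θ : ∀ i, MovingThreshold T (f i) (a i) (l i)) (k : ℕ)
    (h : extensionSet θ) : ((extensionMap θ)^[k] h).1 =
      (T^[k] h.1.1, cycShift^[k] h.1.2.1, fun i n => h.1.2.2 i (n + k)) := by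
  induction k generalizing h with
  | zero => rfl
  | succ k ih =>
    rw [Function.iterate_succ_apply, ih]
    simp only [Function.iterate_succ_apply, extensionMap]
    refine Prod.ext rfl (Prod.ext rfl ?_)
    funext i n
    exact congrArg (h.1.2.2 i) (by ring)

/-- The finite part of the symbolic information of a point visible at level `m`. -/
def extensionCode (θ : ∀ i, MovingThreshold T (f i) (a i) (l i)) (m : ℕ) (h : extensionSet θ) :
    ((n : Fin m) → Fin (n + 1)) × (Fin m → Fin m → Bool) :=
  (fun n => h.1.2.1 n, fun i j => h.1.2.2 i j)

lemma extensionCode_eq_iff (θ : ∀ i, MovingThreshold T (f i) (a i) (l i)) (m : ℕ)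
    (h h' : extensionSet θ) : extensionCode θ m h = extensionCode θ m h' ↔
      (∀ n < m, h.1.2.1 n = h'.1.2.1 n) ∧ ∀ i < m, ∀ j < m, h.1.2.2 i j = h'.1.2.2 i j := by
  constructor
  · intro e
    rw [extensionCode, extensionCode, Prod.mk.injEq] at e
    exact ⟨fun n hn => congrFun e.1 ⟨n, hn⟩,
      fun i hi j hj => congrFun (congrFun e.2 ⟨i, hi⟩) ⟨j, hj⟩⟩
  · rintro ⟨e1, e2⟩
    rw [extensionCode, extensionCode, Prod.mk.injEq]
    exact ⟨funext fun n => e1 n n.2, funext fun i => funext fun j => e2 i i.2 j j.2⟩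

lemma continuous_extensionCode [TopologicalSpace X]
    (θ : ∀ i, MovingThreshold T (f i) (a i) (l i)) (m : ℕ) : Continuous (extensionCode θ m) := by
  unfold extensionCode
  fun_prop

/-- The codes separate points as soon as the thresholds separate the points of `X`. -/
lemma eq_of_extensionCode_eq (θ : ∀ i, MovingThreshold T (f i) (a i) (l i))
    (hsep : ∀ x y : X, x ≠ y → ∃ i, f i x < a i ∧ a i + l i < f i y) {h h' : extensionSet θ}
    (e : ∀ m, extensionCode θ m h = extensionCode θ m h') : h = h' := by
  simp only [extensionCode_eq_iff] at e
  have e1 : h.1.2.1 = h'.1.2.1 := funext fun n => (e (n + 1)).1 n (by omega)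
  have e2 : h.1.2.2 = h'.1.2.2 := funext fun i => funext fun j =>
    (e (i + j + 1)).2 i (by omega) j (by omega)
  refine Subtype.ext (Prod.ext ?_ (Prod.ext e1 e2))
  by_contra hne
  obtain ⟨i, hi1, hi2⟩ := hsep _ _ hne
  have h1 := h.2 i 0 0
  have h2 := h'.2 i 0 0
  rw [← e2] at h2
  simp only [Function.iterate_zero, id, (θ i).left_zero, (θ i).width_zero] at h1 h2
  cases hb : h.1.2.2 i 0 with
  | false => exact absurd (h2.1 hb) (not_le.2 hi2)
  | true => exact absurd (h1.2 hb) (not_le.2 hi1)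

/-- Fibres of the extension have zero capacity entropy for any compatible metric: an
`(n, ε)`-separated set in the fibre of `x` is coded injectively by the phase coordinates
below `m` and, for `i < m`, words of length `n + m` in `(θ i).patterns x`. -/
lemma upcapEntropy_fiber_eq_zero (θ : ∀ i, MovingThreshold T (f i) (a i) (l i))
    [MetricSpace (extensionSet θ)]
    (hsmall : ∀ ε : ℝ, 0 < ε → ∃ m, ∀ h h' : extensionSet θ,
      extensionCode θ m h = extensionCode θ m h' → dist h h' < ε) (x : X) :
    upcapEntropy (extensionMap θ) ((fun h : extensionSet θ => h.1.1) ⁻¹' {x}) = 0 := by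
  classical
  refine upcapEntropy_eq_zero fun ε hε => ?_
  obtain ⟨m, hm⟩ := hsmall ε hε
  refine ⟨m, fun D hD => ?_⟩
  choose K hK using fun i => (θ i).patterns_card_pow_le x D hD
  let Q : ℕ := Fintype.card ((n : Fin m) → Fin (n + 1))
  refine ⟨Q ^ D * ∏ i : Fin m, (K i * 2 ^ m), fun n E hE => ?_⟩
  let words : (i : Fin m) → Finset (Fin (n + m) → Bool) := fun i =>
    (Set.toFinite ((θ i).patterns x (n + m))).toFinset
  let Φ : extensionSet θ → ((n : Fin m) → Fin (n + 1)) × (Fin m → Fin (n + m) → Bool) := fun h =>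
    (fun n => h.1.2.1 n, fun i j => h.1.2.2 i j)
  have hcard : E.card ≤ Q * ∏ i : Fin m, ((θ i).patterns x (n + m)).ncard := by
    have h1 : E.card ≤ ((Finset.univ : Finset ((n : Fin m) → Fin (n + 1))) ×ˢ
        Fintype.piFinset words).card := by
      refine Finset.card_le_card_of_injOn Φ ?_ ?_
      · intro h hh
        have hx : h.1.1 = x := hE.1 hh
        refine Finset.mem_coe.2 (Finset.mem_product.2 ⟨Finset.mem_univ _,
          Fintype.mem_piFinset.2 fun i => ?_⟩)
        rw [Set.Finite.mem_toFinset]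
        refine ⟨h.1.2.1, h.1.2.2 i, ?_, rfl⟩
        rw [← hx]
        exact h.2 i
      · intro h hh h' hh' e
        by_contra hne
        obtain ⟨k, hk, hlt⟩ := hE.2 h hh h' hh' hne
        refine absurd (hm _ _ ((extensionCode_eq_iff θ m _ _).2 ?_)) (not_lt.2 hlt.le)
        rw [Prod.mk.injEq] at e
        simp only [extensionMap_iterate]
        refine ⟨fun p hp => ?_, fun i hi j hj => ?_⟩
        · rw [cycShift_iterate, cycShift_iterate]
          congr 1
          exact congrFun e.1 ⟨p, hp⟩
        · exact congrFun (congrFun e.2 ⟨i, hi⟩) ⟨j + k, by omega⟩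
    rw [Finset.card_product, Finset.card_univ, Fintype.card_piFinset] at h1
    refine h1.trans_eq ?_
    congr 1
    refine Finset.prod_congr rfl fun i _ => ?_
    rw [Set.ncard_eq_toFinset_card _ (Set.toFinite _)]
  calc E.card ^ D ≤ (Q * ∏ i : Fin m, ((θ i).patterns x (n + m)).ncard) ^ D :=
        Nat.pow_le_pow_left hcard D
    _ = Q ^ D * ∏ i : Fin m, ((θ i).patterns x (n + m)).ncard ^ D := by
        rw [mul_pow, Finset.prod_pow]
    _ ≤ Q ^ D * ∏ i : Fin m, (K i * 2 ^ m * 2 ^ n) := by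
        gcongr with i
        refine (hK i (n + m)).trans_eq ?_
        rw [pow_add]; ring
    _ = (Q ^ D * ∏ i : Fin m, (K i * 2 ^ m)) * 2 ^ (m * n) := by
        rw [Finset.prod_mul_distrib (f := fun i : Fin m => K i * 2 ^ m), Finset.prod_const]
        simp [← pow_mul]
        ring

end Extension

/-- **Feng–Huang, Lemma 3.12**: every topological dynamical system `(X,T)` with finite
topological entropy `h_top(T) = h^B_top(T,X) < ∞` admits a zero-dimensional extension
`π : (H,Γ) → (X,T)` all of whose fibers have zero upper capacity topological entropy:
`sup_{x ∈ X} h^{UC}_top(Γ, π⁻¹(x)) = 0`. -/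
theorem exists_zeroDimensional_extension_with_zero_fiber_entropy
    {X : Type u} [MetricSpace X] [CompactSpace X]
    (T : X → X) (hT : Continuous T) (hfin : bowenEntropy T Set.univ ≠ ∞) :
    ∃ (H : Type u) (_ : MetricSpace H) (_ : CompactSpace H) (Γ : H → H) (π : H → X),
      Continuous Γ ∧ Continuous π ∧ Function.Surjective π ∧ π ∘ Γ = T ∘ π ∧
      (∀ δ : ℝ, 0 < δ → ∃ P : Finset (Set H),
        (∀ V ∈ P, IsClopen V ∧ Metric.diam V < δ) ∧
        (P : Set (Set H)).PairwiseDisjoint id ∧ ⋃₀ (P : Set (Set H)) = Set.univ) ∧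
      (⨆ x : X, upcapEntropy Γ (π ⁻¹' {x})) = 0 := by
  classical
  rcases isEmpty_or_nonempty X with hX | hX
  · refine ⟨X, inferInstance, inferInstance, T, id, hT, continuous_id, Function.surjective_id, rfl,
      fun δ _ => ⟨∅, by simp, by simp, ?_⟩, by simp⟩
    exact Subsingleton.elim _ _
  obtain ⟨b, hb⟩ := exists_hasExpCovers hT hfin
  -- distances to a dense sequence, each with the windows `[1 / (l + 1), 2 / (l + 1)]`
  let f : ℕ → X → ℝ := fun i x => dist x (TopologicalSpace.denseSeq X i.unpair.1)
  let a : ℕ → ℝ := fun i => 1 / ((i.unpair.2 : ℝ) + 1)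
  have hf : ∀ i, Continuous (f i) := fun i => continuous_id.dist continuous_const
  have ha : ∀ i, 0 < a i := fun i => Nat.one_div_pos_of_nat
  have hsep : ∀ x y : X, x ≠ y → ∃ i, f i x < a i ∧ a i + a i < f i y := by
    intro x y hxy
    obtain ⟨l, hl⟩ := exists_nat_one_div_lt (div_pos (dist_pos.2 hxy) (by norm_num : (0 : ℝ) < 3))
    obtain ⟨p, hp⟩ := (TopologicalSpace.denseRange_denseSeq X).exists_dist_lt x
      (Nat.one_div_pos_of_nat (n := l) (α := ℝ))
    refine ⟨Nat.pair p l, ?_⟩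
    simp only [f, a, Nat.unpair_pair]
    have := dist_triangle_right x y (TopologicalSpace.denseSeq X p)
    exact ⟨hp, by linarith⟩
  let θ : ∀ i, MovingThreshold T (f i) (a i) (a i) := fun i =>
    (exists_movingThreshold hb (hf i) (a i) (a i) (ha i)).some
  have : CompactSpace (extensionSet θ) :=
    isCompact_iff_compactSpace.1 (isClosed_extensionSet hT hf θ).isCompact
  let _ : MetricSpace (extensionSet θ) := TopologicalSpace.metrizableSpaceMetric _
  have hsmall : ∀ ε : ℝ, 0 < ε → ∃ m, ∀ h h' : extensionSet θ,
      extensionCode θ m h = extensionCode θ m h' → dist h h' < ε := by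
    refine exists_relation_small
      (fun m => {q | extensionCode θ m q.1 = extensionCode θ m q.2}) (fun m => ?_) (fun m => ?_)
      (fun h h' e => eq_of_extensionCode_eq θ hsep e)
    · exact isClosed_eq ((continuous_extensionCode θ m).comp continuous_fst)
        ((continuous_extensionCode θ m).comp continuous_snd)
    · rintro ⟨h, h'⟩ e
      simp only [Set.mem_ofPred_eq, extensionCode_eq_iff] at e ⊢
      exact ⟨fun n hn => e.1 n (by omega), fun i hi j hj => e.2 i (by omega) j (by omega)⟩
  refine ⟨extensionSet θ, inferInstance, inferInstance, extensionMap θ, fun h => h.1.1,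
    continuous_extensionMap hT θ, continuous_fst.comp continuous_subtype_val, ?_, rfl, ?_, ?_⟩
  · intro x
    choose ω hω using fun i => (θ i).exists_admissible x (fun _ => 0)
    exact ⟨⟨(x, fun _ => 0, ω), hω⟩, rfl⟩
  · intro δ hδ
    obtain ⟨m, hm⟩ := hsmall (δ / 2) (by positivity)
    refine ⟨Finset.univ.image fun c => extensionCode θ m ⁻¹' {c}, ?_, ?_, ?_⟩
    · intro V hV
      obtain ⟨c, -, rfl⟩ := Finset.mem_image.1 hV
      refine ⟨(isClopen_discrete {c}).preimage (continuous_extensionCode θ m), ?_⟩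
      refine (Metric.diam_le_of_forall_dist_le (by positivity) fun h hh h' hh' => ?_).trans_lt
        (half_lt_self hδ)
      exact (hm h h' (Eq.trans hh (Eq.symm hh'))).le
    · intro V hV V' hV' hne
      obtain ⟨c, -, rfl⟩ := Finset.mem_image.1 (Finset.mem_coe.1 hV)
      obtain ⟨c', -, rfl⟩ := Finset.mem_image.1 (Finset.mem_coe.1 hV')
      refine Set.disjoint_left.2 fun h hh hh' => hne ?_
      have : c = c' := Eq.trans (Eq.symm hh) hh'
      rw [this]
    · refine Set.eq_univ_of_forall fun h => ?_
      refine ⟨extensionCode θ m ⁻¹' {extensionCode θ m h}, ?_, rfl⟩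
      exact Finset.mem_coe.2 (Finset.mem_image_of_mem _ (Finset.mem_univ _))
  · rw [ENNReal.iSup_eq_zero]
    exact upcapEntropy_fiber_eq_zero θ hsmall
end
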